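/- Fix a positive integer k. For positive real x, let C(x) denote the number of cyclic numbers ≤ x. Then the sum of the k-th powers of all cyclic numbers ≤ x is asymptotically equivalent to C(x)·x^k/(k+1) as x → ∞. -/

import Mathlib

open Filter Asymptotics Real

/-- A positive integer `n` is *cyclic* if `gcd(n, φ(n)) = 1`. -/
def IsCyclicNum (n : ℕ) : Prop := 0 < n ∧ Nat.gcd n (Nat.totient n) = 1

instance : DecidablePred IsCyclicNum := fun n =>
  decidable_of_iff (0 < n ∧ Nat.gcd n (Nat.totient n) = 1) Iff.rfl

/-- The `n`-th cyclic number, indexed from 1: `cyclicNum 1 = 1`, `cyclicNum 2 = 2`, .... -/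
noncomputable def cyclicNum (n : ℕ) : ℕ := Nat.nth IsCyclicNum (n - 1)

/-- The number of cyclic numbers less than or equal to the real number `x`. -/
noncomputable def cyclicCount (x : ℝ) : ℕ :=
  ((Finset.range (⌊x⌋₊ + 1)).filter IsCyclicNum).card

/-- The sum of the `k`-th powers of all cyclic numbers `≤ x`. -/
noncomputable def cyclicPowSum (k : ℕ) (x : ℝ) : ℝ :=
  ∑ n ∈ (Finset.range (⌊x⌋₊ + 1)).filter IsCyclicNum, (n : ℝ) ^ k

open Finset

lemma sum_conv (F : ℕ → ℕ → ℝ) (x : ℝ) :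
    ∑ n ∈ Ioc 0 ⌊x⌋₊, ∑ d ∈ n.divisorsAntidiagonal, F d.1 d.2
      = ∑ m ∈ Ioc 0 ⌊x⌋₊, ∑ k ∈ Ioc 0 ⌊x / m⌋₊, F m k := by
  rw [Finset.sum_sigma', Finset.sum_sigma']
  refine Finset.sum_bij' (fun a _ => ⟨a.2.1, a.2.2⟩) (fun b _ => ⟨b.1 * b.2, (b.1, b.2)⟩) ?_ ?_ ?_ ?_ ?_
  · rintro ⟨n, a, b⟩ h
    simp only [mem_sigma, mem_Ioc, Nat.mem_divisorsAntidiagonal] at h ⊢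
    obtain ⟨⟨h1, h2⟩, h3, h4⟩ := h
    rw [Nat.floor_div_natCast]
    have ha : 0 < a := Nat.pos_of_ne_zero (by rintro rfl; simp at h3; omega)
    have hb : 0 < b := Nat.pos_of_ne_zero (by rintro rfl; simp at h3; omega)
    refine ⟨⟨ha, ?_⟩, hb, ?_⟩
    · nlinarith
    · rw [Nat.le_div_iff_mul_le ha]; nlinarith
  · rintro ⟨a, b⟩ h
    simp only [mem_sigma, mem_Ioc, Nat.mem_divisorsAntidiagonal] at h ⊢
    rw [Nat.floor_div_natCast] at h
    obtain ⟨⟨h1, h2⟩, h3, h4⟩ := h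
    rw [Nat.le_div_iff_mul_le h1] at h4
    exact ⟨⟨by positivity, by linarith⟩, trivial, by positivity⟩
  · rintro ⟨n, a, b⟩ h
    simp only [mem_sigma, mem_Ioc, Nat.mem_divisorsAntidiagonal] at h
    obtain ⟨_, rfl, _⟩ := h
    rfl
  · rintro ⟨a, b⟩ h; rfl
  · rintro ⟨n, a, b⟩ h; rfl

/-- Abel-type inequality: partial sums `≤ K n + L` against an antitone weight. -/
lemma abel_le (a f : ℕ → ℝ) (K L : ℝ) (N : ℕ)
    (hA : ∀ n ≤ N, ∑ i ∈ Ioc 0 n, a i ≤ K * n + L)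
    (hf0 : ∀ n, 1 ≤ n → n ≤ N → 0 ≤ f n)
    (hf : ∀ n, 1 ≤ n → n + 1 ≤ N → f (n + 1) ≤ f n) :
    ∑ i ∈ Ioc 0 N, a i * f i ≤ K * ∑ i ∈ Ioc 0 N, f i + (if N = 0 then 0 else L * f 1) := by
  have key : ∀ n, 1 ≤ n → n ≤ N → ∑ i ∈ Ioc 0 n, a i * f i
      ≤ K * ∑ i ∈ Ioc 0 n, f i + L * f 1 + (∑ i ∈ Ioc 0 n, a i - K * n - L) * f n := by
    intro n hn
    induction n, hn using Nat.le_induction with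
    | base => intro _; simp; linarith
    | succ n hn ih =>
      intro h
      have h1 := ih (by omega)
      have h2 := hA n (by omega)
      have h3 := hf n hn h
      rw [Finset.sum_Ioc_succ_top (by omega), Finset.sum_Ioc_succ_top (by omega),
        Finset.sum_Ioc_succ_top (by omega)]
      push_cast
      nlinarith
  rcases Nat.eq_zero_or_pos N with rfl | hN
  · simp
  · have h1 := key N hN le_rfl
    have h2 := hA N le_rfl
    have h3 := hf0 N hN le_rfl
    rw [if_neg (by omega)]
    nlinarith

lemma floor_pos' {x : ℝ} (hx : 1 ≤ x) : 1 ≤ ⌊x⌋₊ := by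
  rw [Nat.one_le_floor_iff]; exact hx

lemma log_fact_nat (N : ℕ) (hN : 1 ≤ N) :
    (N:ℝ) * log N - N ≤ ∑ n ∈ Ioc 0 N, log (n:ℝ) ∧
    ∑ n ∈ Ioc 0 N, log (n:ℝ) ≤ N * log N - N + log N + 1 := by
  induction N, hN using Nat.le_induction with
  | base => simp
  | succ n hn ih =>
    rw [Finset.sum_Ioc_succ_top (by omega)]
    push_cast
    have hn' : (1:ℝ) ≤ n := by exact_mod_cast hn
    have h1 : log ((n:ℝ)+1) - log n ≤ 1 / n := by
      rw [← Real.log_div (by positivity) (by positivity)]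
      have := Real.log_le_sub_one_of_pos (show (0:ℝ) < (n+1)/n by positivity)
      have e : ((n:ℝ)+1)/n - 1 = 1/n := by field_simp; ring
      linarith
    have h2 : 1 / ((n:ℝ)+1) ≤ log ((n:ℝ)+1) - log n := by
      rw [← Real.log_div (by positivity) (by positivity)]
      have := Real.one_sub_inv_le_log_of_pos (show (0:ℝ) < (n+1)/n by positivity)
      have e : 1 - (((n:ℝ)+1)/n)⁻¹ = 1/(n+1) := by field_simp; ring
      linarith
    have h3 : (n:ℝ) * (log ((n:ℝ)+1) - log n) ≤ 1 := by
      calc _ ≤ (n:ℝ) * (1/n) := by gcongr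
        _ = 1 := by field_simp
    have h4 : 1 ≤ ((n:ℝ)+1) * (log ((n:ℝ)+1) - log n) := by
      calc 1 = ((n:ℝ)+1) * (1/(n+1)) := by field_simp
        _ ≤ _ := by gcongr
    constructor <;> nlinarith [ih.1, ih.2]

lemma log_fact_real (x : ℝ) (hx : 1 ≤ x) :
    |∑ n ∈ Ioc 0 ⌊x⌋₊, log (n:ℝ) - (x * log x - x)| ≤ 2 * log x + 2 := by
  have hN := floor_pos' hx
  set N := ⌊x⌋₊ with hNdef
  have h1 : (N:ℝ) ≤ x := Nat.floor_le (by linarith)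
  have h2 : x < N + 1 := Nat.lt_floor_add_one x
  obtain ⟨h3, h4⟩ := log_fact_nat N hN
  have hN' : (1:ℝ) ≤ N := by exact_mod_cast hN
  have hx0 : 0 < x := by linarith
  have hlx : 0 ≤ log x := Real.log_nonneg hx
  have h5 : log N ≤ log x := Real.log_le_log (by linarith) h1
  have h6 : (N:ℝ) * (log x - log N) ≤ x - N := by
    rw [← Real.log_div (by positivity) (by positivity)]
    have := Real.log_le_sub_one_of_pos (show (0:ℝ) < x/N by positivity)
    calc (N:ℝ) * log (x/N) ≤ N * (x/N - 1) := by gcongr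
      _ = x - N := by field_simp
  have h7 : 0 ≤ (N:ℝ) * (log x - log N) := mul_nonneg (by linarith) (by linarith)
  rw [abs_le]
  constructor <;> nlinarith

lemma harm_real (x : ℝ) (hx : 1 ≤ x) :
    |∑ n ∈ Ioc 0 ⌊x⌋₊, (1:ℝ)/n - (log x + eulerMascheroniConstant)| ≤ 2 / x := by
  have hN := floor_pos' hx
  set N := ⌊x⌋₊ with hNdef
  have h1 : (N:ℝ) ≤ x := Nat.floor_le (by linarith)
  have h2 : x < N + 1 := Nat.lt_floor_add_one x
  have hN' : (1:ℝ) ≤ N := by exact_mod_cast hN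
  have hH : ∑ n ∈ Ioc 0 N, (1:ℝ)/n = harmonic N := by
    rw [harmonic_eq_sum_Icc]
    push_cast
    rw [← Finset.Icc_add_one_left_eq_Ioc]
    simp
  have h3 := eulerMascheroniSeq_lt_eulerMascheroniConstant N
  have h4 := eulerMascheroniConstant_lt_eulerMascheroniSeq' N
  rw [eulerMascheroniSeq] at h3
  rw [eulerMascheroniSeq', if_neg (by omega)] at h4
  rw [hH]
  have hx0 : 0 < x := by linarith
  have h5 : log x - log N ≤ 2 / x := by
    rw [← Real.log_div (by positivity) (by positivity)]
    have := Real.log_le_sub_one_of_pos (show (0:ℝ) < x/N by positivity)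
    have e : x / N - 1 ≤ 2 / x := by
      rw [div_sub_one (by positivity), div_le_div_iff₀ (by positivity) hx0]
      nlinarith
    linarith
  have h6 : log (N+1) - log x ≤ 2 / x := by
    rw [← Real.log_div (by positivity) (by positivity)]
    have := Real.log_le_sub_one_of_pos (show (0:ℝ) < ((N:ℝ)+1)/x by positivity)
    have e : ((N:ℝ)+1)/x - 1 ≤ 2 / x := by
      rw [div_sub_one (by positivity)]
      gcongr; linarith
    linarith
  rw [abs_le]
  constructor <;> linarith

section Part1

open ArithmeticFunction (vonMangoldt moebius)

local notation "Λ" => ArithmeticFunction.vonMangoldt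
local notation "μ" => ArithmeticFunction.moebius
local notation "ψ" => Chebyshev.psi

lemma sqrt_sum (x : ℝ) (hx : 0 ≤ x) : ∑ d ∈ Ioc 0 ⌊x⌋₊, √(x / d) ≤ 2 * x := by
  have key : ∀ N : ℕ, ∑ d ∈ Ioc 0 N, 1 / √(d:ℝ) ≤ 2 * √(N:ℝ) := by
    intro N
    induction N with
    | zero => simp
    | succ n ih =>
      rw [Finset.sum_Ioc_succ_top (by omega)]
      push_cast
      have h1 : 0 < √((n:ℝ)+1) := Real.sqrt_pos.mpr (by positivity)
      have h2 : √((n:ℝ)+1)^2 = n + 1 := Real.sq_sqrt (by positivity)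
      have h3 : √(n:ℝ)^2 = n := Real.sq_sqrt (by positivity)
      have h4 : 0 ≤ √(n:ℝ) := Real.sqrt_nonneg _
      have : 1 / √((n:ℝ)+1) ≤ 2 * (√((n:ℝ)+1) - √(n:ℝ)) := by
        rw [div_le_iff₀ h1]
        nlinarith [sq_nonneg (√((n:ℝ)+1) - √(n:ℝ))]
      linarith
  calc ∑ d ∈ Ioc 0 ⌊x⌋₊, √(x / d) = √x * ∑ d ∈ Ioc 0 ⌊x⌋₊, 1 / √(d:ℝ) := by
        rw [Finset.mul_sum]
        refine Finset.sum_congr rfl fun d _ => ?_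
        rw [Real.sqrt_div hx]; ring
    _ ≤ √x * (2 * √(⌊x⌋₊:ℝ)) := by gcongr; exact key _
    _ ≤ √x * (2 * √x) := by gcongr; exact Nat.floor_le hx
    _ = 2 * x := by nlinarith [Real.mul_self_sqrt hx]

lemma psi_le6 {x : ℝ} (hx : 0 ≤ x) : ψ x ≤ 6 * x := by
  have := Chebyshev.psi_le_const_mul_self hx
  have h4 : log 4 ≤ 2 := by
    have : log (4:ℝ) = 2 * log 2 := by
      rw [show (4:ℝ) = 2^2 by norm_num, Real.log_pow]; norm_num
    linarith [Real.log_two_lt_d9]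
  nlinarith

lemma log_le_self_sub {x : ℝ} (hx : 1 ≤ x) : log x ≤ x - 1 :=
  Real.log_le_sub_one_of_pos (by linarith)

lemma antidiag_snd (n : ℕ) : ∑ d ∈ n.divisorsAntidiagonal, Λ d.2 = log n := by
  rw [Nat.sum_divisorsAntidiagonal' (f := fun _ y => Λ y)]
  exact ArithmeticFunction.vonMangoldt_sum

lemma antidiag_fst (n : ℕ) : ∑ d ∈ n.divisorsAntidiagonal, Λ d.1 = log n := by
  rw [Nat.sum_divisorsAntidiagonal (f := fun y _ => Λ y)]
  exact ArithmeticFunction.vonMangoldt_sum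

lemma sum_psi_div (x : ℝ) : ∑ m ∈ Ioc 0 ⌊x⌋₊, ψ (x / m) = ∑ n ∈ Ioc 0 ⌊x⌋₊, log (n:ℝ) := by
  have := sum_conv (fun _ k => Λ k) x
  simp only [antidiag_snd] at this
  rw [this]; rfl

lemma mertens {x : ℝ} (hx : 1 ≤ x) : |∑ n ∈ Ioc 0 ⌊x⌋₊, Λ n / n - log x| ≤ 11 := by
  have h := sum_conv (fun m _ => Λ m) x
  simp only [antidiag_fst, Finset.sum_const, Nat.card_Ioc, nsmul_eq_mul, Nat.sub_zero] at h
  have hx0 : 0 < x := by linarith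
  have h1 := log_fact_real x hx
  rw [abs_le] at h1
  have hl := log_le_self_sub hx
  have hup : ∑ m ∈ Ioc 0 ⌊x⌋₊, (⌊x / m⌋₊:ℝ) * Λ m ≤ x * ∑ n ∈ Ioc 0 ⌊x⌋₊, Λ n / n := by
    rw [Finset.mul_sum]
    refine Finset.sum_le_sum fun m hm => ?_
    have : (⌊x / m⌋₊:ℝ) ≤ x / m := Nat.floor_le (by positivity)
    calc _ ≤ (x / m) * Λ m := by gcongr
      _ = _ := by ring
  have hlo : x * ∑ n ∈ Ioc 0 ⌊x⌋₊, Λ n / n - ψ x ≤ ∑ m ∈ Ioc 0 ⌊x⌋₊, (⌊x / m⌋₊:ℝ) * Λ m := by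
    rw [Finset.mul_sum, Chebyshev.psi, ← Finset.sum_sub_distrib]
    refine Finset.sum_le_sum fun m hm => ?_
    have : x / m < (⌊x / m⌋₊:ℝ) + 1 := Nat.lt_floor_add_one _
    calc _ = (x / m - 1) * Λ m := by ring
      _ ≤ _ := by gcongr; linarith
  have hp := psi_le6 hx0.le
  rw [← h] at hup hlo
  set S := ∑ n ∈ Ioc 0 ⌊x⌋₊, Λ n / n
  rw [abs_le]
  constructor
  · by_contra hc; push Not at hc
    nlinarith
  · by_contra hc; push Not at hc
    nlinarith

noncomputable def Fsel (x : ℝ) : ℝ := ψ x - x + (eulerMascheroniConstant + 1)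

lemma gamma_bd : 0 < eulerMascheroniConstant ∧ eulerMascheroniConstant < 1 :=
  ⟨by linarith [one_half_lt_eulerMascheroniConstant], by linarith [eulerMascheroniConstant_lt_two_thirds]⟩

lemma Fsel_sum {y : ℝ} (hy : 1 ≤ y) : |∑ n ∈ Ioc 0 ⌊y⌋₊, Fsel (y / n)| ≤ 2 * log y + 6 := by
  have hy0 : 0 < y := by linarith
  have h1 := log_fact_real y hy
  have h2 := harm_real y hy
  have e : ∑ n ∈ Ioc 0 ⌊y⌋₊, Fsel (y / n) = ∑ n ∈ Ioc 0 ⌊y⌋₊, log (n:ℝ)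
      - y * ∑ n ∈ Ioc 0 ⌊y⌋₊, (1:ℝ)/n + (eulerMascheroniConstant + 1) * ⌊y⌋₊ := by
    rw [← sum_psi_div, Finset.mul_sum]
    simp only [Fsel, Finset.sum_add_distrib, Finset.sum_sub_distrib, Finset.sum_const,
      Nat.card_Ioc, nsmul_eq_mul, Nat.sub_zero]
    congr 1
    · congr 1
      exact Finset.sum_congr rfl fun d _ => by ring
    · ring
  have h3 : (⌊y⌋₊:ℝ) ≤ y := Nat.floor_le hy0.le
  have h4 : y < ⌊y⌋₊ + 1 := Nat.lt_floor_add_one y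
  obtain ⟨g1, g2⟩ := gamma_bd
  have h2' : |y * (∑ n ∈ Ioc 0 ⌊y⌋₊, (1:ℝ)/n - (log y + eulerMascheroniConstant))| ≤ 2 := by
    rw [abs_mul, abs_of_pos hy0]
    calc _ ≤ y * (2 / y) := by gcongr
      _ = 2 := by field_simp
  rw [e]
  rw [abs_le] at h1 h2' ⊢
  constructor <;> nlinarith

lemma moebius_log (x : ℝ) (hx : 0 < x) (k : ℕ) (hk : 0 < k) :
    ∑ d ∈ k.divisors, (μ d : ℝ) * log (x / d) = (if k = 1 then log x else 0) + Λ k := by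
  have h1 : ∑ d ∈ k.divisors, (μ d : ℝ) * log (x / d)
      = log x * ∑ d ∈ k.divisors, (μ d : ℝ) - ∑ d ∈ k.divisors, (μ d : ℝ) * ArithmeticFunction.log d := by
    rw [Finset.mul_sum, ← Finset.sum_sub_distrib]
    refine Finset.sum_congr rfl fun d hd => ?_
    have : 0 < d := Nat.pos_of_mem_divisors hd
    rw [Real.log_div hx.ne' (by positivity), ArithmeticFunction.log_apply]; ring
  rw [h1, ArithmeticFunction.sum_moebius_mul_log_eq]
  have h2 : ∑ d ∈ k.divisors, (μ d : ℝ) = if k = 1 then 1 else 0 := by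
    have := congrArg (fun f => f k) (ArithmeticFunction.coe_moebius_mul_coe_zeta (R := ℝ))
    simp only [ArithmeticFunction.mul_zeta_apply, ArithmeticFunction.coe_mul_zeta_apply, ArithmeticFunction.one_apply] at this
    simpa using this
  rw [h2]; split_ifs <;> ring

lemma tatuzawa {x : ℝ} (hx : 1 ≤ x) :
    |Fsel x * log x + ∑ k ∈ Ioc 0 ⌊x⌋₊, Fsel (x / k) * Λ k| ≤ 112 * x := by
  have hx0 : 0 < x := by linarith
  have h := sum_conv (fun d n => (μ d : ℝ) * log (x / d) * Fsel (x / (d * n))) x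
  have hl : ∑ n ∈ Ioc 0 ⌊x⌋₊, ∑ d ∈ n.divisorsAntidiagonal, (μ d.1 : ℝ) * log (x / d.1) * Fsel (x / (d.1 * d.2))
      = Fsel x * log x + ∑ k ∈ Ioc 0 ⌊x⌋₊, Fsel (x / k) * Λ k := by
    have : ∀ n ∈ Ioc 0 ⌊x⌋₊, ∑ d ∈ n.divisorsAntidiagonal, (μ d.1 : ℝ) * log (x / d.1) * Fsel (x / (d.1 * d.2))
       = (if n = 1 then Fsel x * log x else 0) + Fsel (x / n) * Λ n := by
      intro n hn
      have hn0 : 0 < n := (Finset.mem_Ioc.mp hn).1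
      calc _ = ∑ d ∈ n.divisorsAntidiagonal, ((μ d.1 : ℝ) * log (x / d.1)) * Fsel (x / n) := by
            refine Finset.sum_congr rfl fun d hd => ?_
            have := (Nat.mem_divisorsAntidiagonal.mp hd).1
            rw [← this]; push_cast; rfl
        _ = (∑ d ∈ n.divisors, (μ d : ℝ) * log (x / d)) * Fsel (x / n) := by
            rw [← Finset.sum_mul, Nat.sum_divisorsAntidiagonal (f := fun y _ => (μ y : ℝ) * log (x / y))]
        _ = _ := by
            rw [moebius_log x hx0 n hn0]
            split_ifs with h1
            · subst h1; simp; ring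
            · ring
    rw [Finset.sum_congr rfl this, Finset.sum_add_distrib, Finset.sum_ite_eq']
    rw [if_pos]
    simp [floor_pos' hx]
  rw [← hl, h]
  calc _ ≤ ∑ d ∈ Ioc 0 ⌊x⌋₊, |∑ n ∈ Ioc 0 ⌊x / d⌋₊, (μ d : ℝ) * log (x / d) * Fsel (x / (d * n))| :=
        Finset.abs_sum_le_sum_abs _ _
    _ ≤ ∑ d ∈ Ioc 0 ⌊x⌋₊, 56 * √(x / d) := by
        refine Finset.sum_le_sum fun d hd => ?_
        obtain ⟨hd1, hd2⟩ := Finset.mem_Ioc.mp hd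
        have hd' : (0:ℝ) < d := by exact_mod_cast hd1
        have ht : 1 ≤ x / d := by
          rw [le_div_iff₀ hd', one_mul]
          exact (Nat.le_floor_iff hx0.le).mp hd2
        simp only [← div_div]
        rw [← Finset.mul_sum]
        set t := x / d
        have hF := Fsel_sum ht
        have hlt : 0 ≤ log t := Real.log_nonneg ht
        have hmu : |(μ d : ℝ)| ≤ 1 := by exact_mod_cast ArithmeticFunction.abs_moebius_le_one
        rw [abs_mul, abs_mul, abs_of_nonneg hlt]
        have hu : log t ≤ 4 * √√t := by
          have h0 : 0 < √√t := by positivity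
          have : log t = 4 * log (√√t) := by
            rw [Real.log_sqrt (by positivity), Real.log_sqrt (by positivity)]; ring
          have := Real.log_le_sub_one_of_pos h0
          linarith
        have hs : √√t ^ 2 = √t := Real.sq_sqrt (by positivity)
        have hs1 : 1 ≤ √√t := by
          rw [Real.one_le_sqrt, Real.one_le_sqrt]; exact ht
        calc _ ≤ 1 * log t * (2 * log t + 6) := by gcongr
          _ ≤ 1 * (4 * √√t) * (2 * (4 * √√t) + 6) := by gcongr
          _ ≤ 56 * √t := by nlinarith
    _ ≤ 56 * (2 * x) := by
        rw [← Finset.mul_sum]; gcongr; exact sqrt_sum x hx0.le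
    _ = 112 * x := by ring

lemma sum_log_div {x : ℝ} (hx : 1 ≤ x) : ∑ n ∈ Ioc 0 ⌊x⌋₊, log (x / n) ≤ 5 * x := by
  have hx0 : 0 < x := by linarith
  have h1 := (abs_le.mp (log_fact_real x hx)).1
  have e : ∑ n ∈ Ioc 0 ⌊x⌋₊, log (x / n) = ⌊x⌋₊ * log x - ∑ n ∈ Ioc 0 ⌊x⌋₊, log (n:ℝ) := by
    have : ∀ n ∈ Ioc 0 ⌊x⌋₊, log (x / n) = log x - log n := by
      intro n hn
      have : 0 < n := (Finset.mem_Ioc.mp hn).1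
      rw [Real.log_div hx0.ne' (by positivity)]
    rw [Finset.sum_congr rfl this, Finset.sum_sub_distrib]
    simp
  have h3 : (⌊x⌋₊:ℝ) ≤ x := Nat.floor_le hx0.le
  have := log_le_self_sub hx
  have := Real.log_nonneg hx
  rw [e]; nlinarith

lemma log_div_nonneg {x : ℝ} {n : ℕ} (hn : n ∈ Ioc 0 ⌊x⌋₊) : 1 ≤ x / n ∧ 0 ≤ log (x / n) := by
  obtain ⟨hd1, hd2⟩ := Finset.mem_Ioc.mp hn
  have hx0 : 0 < x := by
    by_contra hc
    push Not at hc
    rw [Nat.floor_of_nonpos hc] at hd2; omega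
  have hd' : (0:ℝ) < n := by exact_mod_cast hd1
  have ht : 1 ≤ x / n := by
    rw [le_div_iff₀ hd', one_mul]
    exact (Nat.le_floor_iff hx0.le).mp hd2
  exact ⟨ht, Real.log_nonneg ht⟩

lemma sum_mangoldt_log_div {x : ℝ} (hx : 1 ≤ x) :
    ∑ n ∈ Ioc 0 ⌊x⌋₊, Λ n * log (x / n) ≤ 30 * x := by
  have hx0 : 0 < x := by linarith
  have := abel_le (fun n => Λ n) (fun n => log (x / n)) 6 0 ⌊x⌋₊ ?_ ?_ ?_
  · simp only [zero_mul, ite_self, add_zero] at this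
    linarith [sum_log_div hx]
  · intro n _
    have := psi_le6 (x := n) (by positivity)
    rw [Chebyshev.psi, Nat.floor_natCast] at this
    linarith
  · intro n h1 h2
    exact (log_div_nonneg (Finset.mem_Ioc.mpr ⟨h1, h2⟩)).2
  · intro n h1 h2
    have : (0:ℝ) < n := by exact_mod_cast h1
    push_cast
    gcongr
    linarith

noncomputable def Wsel (x : ℝ) : ℝ :=
  ∑ n ∈ Ioc 0 ⌊x⌋₊, (Λ n * log n + ∑ d ∈ n.divisorsAntidiagonal, Λ d.1 * Λ d.2)

theorem selberg {x : ℝ} (hx : 1 ≤ x) : |Wsel x - 2 * x * log x| ≤ 200 * x := by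
  have hx0 : 0 < x := by linarith
  have hlx := Real.log_nonneg hx
  have hll := log_le_self_sub hx
  have h1 := tatuzawa hx
  have h2 := mertens hx
  have h3 := sum_mangoldt_log_div hx
  have h3' : 0 ≤ ∑ n ∈ Ioc 0 ⌊x⌋₊, Λ n * log (x / n) :=
    Finset.sum_nonneg fun n hn => mul_nonneg ArithmeticFunction.vonMangoldt_nonneg (log_div_nonneg hn).2
  have e1 : Wsel x = ψ x * log x - ∑ n ∈ Ioc 0 ⌊x⌋₊, Λ n * log (x / n)
      + ∑ k ∈ Ioc 0 ⌊x⌋₊, ψ (x / k) * Λ k := by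
    rw [Wsel, Finset.sum_add_distrib, sum_conv (fun a b => Λ a * Λ b)]
    congr 1
    · rw [Chebyshev.psi, Finset.sum_mul, ← Finset.sum_sub_distrib]
      refine Finset.sum_congr rfl fun n hn => ?_
      have : 0 < n := (Finset.mem_Ioc.mp hn).1
      rw [Real.log_div hx0.ne' (by positivity)]; ring
    · refine Finset.sum_congr rfl fun n hn => ?_
      rw [← Finset.mul_sum, mul_comm]; rfl
  have e2 : ∑ k ∈ Ioc 0 ⌊x⌋₊, Fsel (x / k) * Λ k = ∑ k ∈ Ioc 0 ⌊x⌋₊, ψ (x / k) * Λ k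
      - x * ∑ n ∈ Ioc 0 ⌊x⌋₊, Λ n / n + (eulerMascheroniConstant + 1) * ψ x := by
    rw [Chebyshev.psi, Finset.mul_sum, Finset.mul_sum, ← Finset.sum_sub_distrib, ← Finset.sum_add_distrib]
    refine Finset.sum_congr rfl fun n hn => ?_
    rw [Fsel]; ring
  rw [e2, Fsel] at h1
  obtain ⟨g1, g2⟩ := gamma_bd
  have hp := psi_le6 hx0.le
  have hp0 := Chebyshev.psi_nonneg x
  have h2' : |x * (∑ n ∈ Ioc 0 ⌊x⌋₊, Λ n / n - log x)| ≤ 11 * x := by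
    rw [abs_mul, abs_of_pos hx0]; nlinarith
  rw [e1]
  have b1 : 0 ≤ (eulerMascheroniConstant + 1) * ψ x := by positivity
  have b2 : (eulerMascheroniConstant + 1) * ψ x ≤ 2 * (6 * x) := by gcongr; linarith
  have b3 : 0 ≤ (eulerMascheroniConstant + 1) * log x := by positivity
  have b4 : (eulerMascheroniConstant + 1) * log x ≤ 2 * x := by
    have : log x ≤ x := by linarith
    gcongr; linarith
  rw [abs_le] at h1 h2' ⊢
  constructor <;> nlinarith

end Part1

section Part2

open ArithmeticFunction (vonMangoldt moebius)

local notation "Λ" => ArithmeticFunction.vonMangoldt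
local notation "ψ" => Chebyshev.psi

lemma cyc_iff {n : ℕ} (hn : 0 < n) : IsCyclicNum n ↔
    Squarefree n ∧ ∀ p q : ℕ, p.Prime → q.Prime → p ∣ n → q ∣ n → ¬ p ∣ q - 1 := by
  constructor
  · rintro ⟨_, h⟩
    refine ⟨?_, ?_⟩
    · rw [Nat.squarefree_iff_prime_squarefree]
      intro p hp hd
      have h1 := Nat.totient_dvd_of_dvd hd
      have h2 : p ∣ n.totient := by
        refine dvd_trans ?_ h1
        rw [← pow_two, Nat.totient_prime_pow hp (by norm_num)]
        simp
      have h3 : p ∣ n := dvd_trans (dvd_mul_right p p) hd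
      exact hp.not_dvd_one (h ▸ Nat.dvd_gcd h3 h2)
    · intro p q hp hq hpn hqn hd
      have h1 := Nat.totient_dvd_of_dvd hqn
      rw [Nat.totient_prime hq] at h1
      exact hp.not_dvd_one (h ▸ Nat.dvd_gcd hpn (hd.trans h1))
  · rintro ⟨hs, h⟩
    refine ⟨hn, ?_⟩
    by_contra hc
    obtain ⟨p, hp, hd⟩ := Nat.exists_prime_and_dvd hc
    have h1 := hd.trans (Nat.gcd_dvd_left _ _)
    have h2 := hd.trans (Nat.gcd_dvd_right _ _)
    rw [Nat.totient_eq_div_primeFactors_mul, Nat.prod_primeFactors_of_squarefree hs,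
      Nat.div_self hn, one_mul, hp.prime.dvd_finset_prod_iff] at h2
    obtain ⟨q, hq, hpq⟩ := h2
    exact h p q hp (Nat.prime_of_mem_primeFactors hq) h1 (Nat.dvd_of_mem_primeFactors hq) hpq

lemma cyc_dvd {n m : ℕ} (h : IsCyclicNum n) (hm : m ∣ n) : IsCyclicNum m := by
  have hm0 := Nat.pos_of_dvd_of_pos hm h.1
  rw [cyc_iff h.1] at h
  rw [cyc_iff hm0]
  exact ⟨h.1.squarefree_of_dvd hm, fun p q hp hq h1 h2 => h.2 p q hp hq (h1.trans hm) (h2.trans hm)⟩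

/-- indicator of cyclic numbers -/
noncomputable def cc (n : ℕ) : ℝ := if IsCyclicNum n then 1 else 0

lemma cc_nonneg (n : ℕ) : 0 ≤ cc n := by unfold cc; split_ifs <;> norm_num
lemma cc_le_one (n : ℕ) : cc n ≤ 1 := by unfold cc; split_ifs <;> norm_num
lemma cc_one : cc 1 = 1 := by simp [cc, IsCyclicNum]
lemma cc_dvd {n m : ℕ} (hm : m ∣ n) : cc n ≤ cc m := by
  by_cases h : IsCyclicNum n
  · simp [cc, h, cyc_dvd h hm]
  · simp only [cc, h, if_false]; split_ifs <;> norm_num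

/-- the defect -/
noncomputable def bb (n : ℕ) : ℝ := ∑ d ∈ n.divisorsAntidiagonal, cc d.1 * Λ d.2 - cc n * log n

lemma bb_eq (n : ℕ) : bb n = ∑ d ∈ n.divisorsAntidiagonal, cc d.1 * Λ d.2 * (1 - cc (d.1 * d.2)) := by
  unfold bb
  by_cases h : IsCyclicNum n
  · have h1 : ∑ d ∈ n.divisorsAntidiagonal, cc d.1 * Λ d.2 = log n := by
      rw [← antidiag_snd]
      refine Finset.sum_congr rfl fun d hd => ?_
      have := (Nat.mem_divisorsAntidiagonal.mp hd).1
      have h2 : IsCyclicNum d.1 := cyc_dvd h ⟨d.2, this.symm⟩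
      simp [cc, h2]
    rw [h1]
    symm
    simp only [cc, h, if_true, one_mul, sub_self]
    refine Finset.sum_eq_zero fun d hd => ?_
    have := (Nat.mem_divisorsAntidiagonal.mp hd).1
    rw [this]; simp [h]
  · simp only [cc, h, if_false, zero_mul, sub_zero]
    refine Finset.sum_congr rfl fun d hd => ?_
    have := (Nat.mem_divisorsAntidiagonal.mp hd).1
    rw [this]; simp [h]

lemma bb_nonneg (n : ℕ) : 0 ≤ bb n := by
  rw [bb_eq]
  refine Finset.sum_nonneg fun d _ => ?_
  have := cc_nonneg d.1
  have := cc_le_one (d.1 * d.2)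
  have : 0 ≤ Λ d.2 := ArithmeticFunction.vonMangoldt_nonneg
  have : 0 ≤ 1 - cc (d.1 * d.2) := by linarith
  positivity

noncomputable def Dd (x : ℝ) : ℝ := ∑ m ∈ Ioc 0 ⌊x⌋₊, cc m / m
noncomputable def Mm (x : ℝ) : ℝ := ∑ m ∈ Ioc 0 ⌊x⌋₊, cc m / m * log (x / m)
noncomputable def Cn (x : ℝ) : ℝ := ∑ m ∈ Ioc 0 ⌊x⌋₊, cc m
noncomputable def Bb (x : ℝ) : ℝ := ∑ m ∈ Ioc 0 ⌊x⌋₊, bb m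

lemma arith_identity (n : ℕ) :
    ∑ d ∈ n.divisorsAntidiagonal, cc d.1 * (Λ d.2 * log d.2 + ∑ e ∈ d.2.divisorsAntidiagonal, Λ e.1 * Λ e.2)
      = cc n * log n ^ 2 + bb n * log n + ∑ d ∈ n.divisorsAntidiagonal, bb d.1 * Λ d.2 := by
  have h1 : ∑ d ∈ n.divisorsAntidiagonal, cc d.1 * ∑ e ∈ d.2.divisorsAntidiagonal, Λ e.1 * Λ e.2
      = ∑ d ∈ n.divisorsAntidiagonal, (∑ e ∈ d.1.divisorsAntidiagonal, cc e.1 * Λ e.2) * Λ d.2 := by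
    let C : ArithmeticFunction ℝ := ⟨cc, by simp [cc, IsCyclicNum]⟩
    have := congrArg (fun f => f n) (mul_assoc C Λ Λ)
    simp only [ArithmeticFunction.mul_apply] at this
    exact this.symm
  have h2 : ∑ d ∈ n.divisorsAntidiagonal, cc d.1 * (Λ d.2 * log d.2)
      + ∑ d ∈ n.divisorsAntidiagonal, cc d.1 * log d.1 * Λ d.2
      = (∑ d ∈ n.divisorsAntidiagonal, cc d.1 * Λ d.2) * log n := by
    rw [← Finset.sum_add_distrib, Finset.sum_mul]
    refine Finset.sum_congr rfl fun d hd => ?_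
    obtain ⟨h3, h4⟩ := Nat.mem_divisorsAntidiagonal.mp hd
    have h5 : d.1 ≠ 0 := by rintro h; simp [h] at h3; omega
    have h6 : d.2 ≠ 0 := by rintro h; simp [h] at h3; omega
    rw [← h3]; push_cast
    rw [Real.log_mul (by positivity) (by positivity)]; ring
  have h3 : ∑ d ∈ n.divisorsAntidiagonal, bb d.1 * Λ d.2 =
     ∑ d ∈ n.divisorsAntidiagonal, (∑ e ∈ d.1.divisorsAntidiagonal, cc e.1 * Λ e.2) * Λ d.2
     - ∑ d ∈ n.divisorsAntidiagonal, cc d.1 * log d.1 * Λ d.2 := by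
    rw [← Finset.sum_sub_distrib]
    refine Finset.sum_congr rfl fun d hd => ?_
    unfold bb; ring
  have h4 : bb n * log n = (∑ d ∈ n.divisorsAntidiagonal, cc d.1 * Λ d.2) * log n - cc n * log n ^ 2 := by
    unfold bb; ring
  simp only [mul_add, Finset.sum_add_distrib]
  linarith

lemma selberg_cc (x : ℝ) : ∑ m ∈ Ioc 0 ⌊x⌋₊, cc m * Wsel (x / m)
    = ∑ n ∈ Ioc 0 ⌊x⌋₊, cc n * log n ^ 2 + ∑ n ∈ Ioc 0 ⌊x⌋₊, bb n * log n
      + ∑ n ∈ Ioc 0 ⌊x⌋₊, bb n * ψ (x / n) := by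
  have h1 := sum_conv (fun m k => cc m * (Λ k * log k + ∑ e ∈ k.divisorsAntidiagonal, Λ e.1 * Λ e.2)) x
  have h2 := sum_conv (fun m k => bb m * Λ k) x
  simp only [arith_identity, Finset.sum_add_distrib, h2, ← Finset.mul_sum] at h1
  unfold Wsel
  simp only [Finset.sum_add_distrib, ← Finset.mul_sum]
  rw [← h1]
  rfl

lemma bb_nonneg_sum (n : ℕ) : cc n * log n ≤ ∑ d ∈ n.divisorsAntidiagonal, cc d.1 * Λ d.2 := by
  have := bb_nonneg n
  unfold bb at this; linarith

lemma Mm_lower {x : ℝ} (hx : 1 ≤ x) : (log x - 11) * Dd x ≤ 2 * Mm x := by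
  have hx0 : 0 < x := by linarith
  have h := sum_conv (fun m k => cc m / m * (Λ k / k)) x
  have h1 : ∑ n ∈ Ioc 0 ⌊x⌋₊, cc n / n * log n ≤ ∑ n ∈ Ioc 0 ⌊x⌋₊, ∑ d ∈ n.divisorsAntidiagonal, cc d.1 / d.1 * (Λ d.2 / d.2) := by
    refine Finset.sum_le_sum fun n hn => ?_
    have hn0 : 0 < n := (Finset.mem_Ioc.mp hn).1
    have : ∑ d ∈ n.divisorsAntidiagonal, cc d.1 / d.1 * (Λ d.2 / d.2) = (∑ d ∈ n.divisorsAntidiagonal, cc d.1 * Λ d.2) / n := by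
      rw [Finset.sum_div]
      refine Finset.sum_congr rfl fun d hd => ?_
      obtain ⟨h3, h4⟩ := Nat.mem_divisorsAntidiagonal.mp hd
      rw [← h3]; push_cast
      rw [div_mul_div_comm]
    rw [this, div_mul_eq_mul_div]
    gcongr
    exact bb_nonneg_sum n
  have h2 : ∑ m ∈ Ioc 0 ⌊x⌋₊, ∑ k ∈ Ioc 0 ⌊x / m⌋₊, cc m / m * (Λ k / k) ≤ ∑ m ∈ Ioc 0 ⌊x⌋₊, (cc m / m * log (x / m) + 11 * (cc m / m)) := by
    refine Finset.sum_le_sum fun m hm => ?_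
    rw [← Finset.mul_sum]
    have := (abs_le.mp (mertens (log_div_nonneg hm).1)).2
    have h3 : 0 ≤ cc m / m := div_nonneg (cc_nonneg m) (by positivity)
    nlinarith
  rw [Finset.sum_add_distrib, ← Finset.mul_sum] at h2
  have h3 : ∑ n ∈ Ioc 0 ⌊x⌋₊, cc n / n * log n = log x * Dd x - Mm x := by
    unfold Dd Mm
    rw [Finset.mul_sum, ← Finset.sum_sub_distrib]
    refine Finset.sum_congr rfl fun n hn => ?_
    have hn0 : 0 < n := (Finset.mem_Ioc.mp hn).1
    rw [Real.log_div (by positivity) (by positivity)]; ring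
  rw [← h] at h2
  have h5 := h1.trans h2
  rw [h3] at h5
  unfold Mm Dd at *
  linarith

/-- Chief consequence: how `Cn x log²x` compares to `2 x M(x)`. -/
lemma Cn_asymp_bound {x : ℝ} (hx : 1 ≤ x) :
    |Cn x * log x ^ 2 - 2 * x * Mm x| ≤ 200 * x * Dd x + 10 * x * log x + log x * Bb x
      + 6 * x * ∑ n ∈ Ioc 0 ⌊x⌋₊, bb n / n := by
  have hx0 : 0 < x := by linarith
  have hlx := Real.log_nonneg hx
  have h1 := selberg_cc x
  have h2 : |∑ m ∈ Ioc 0 ⌊x⌋₊, cc m * Wsel (x / m) - 2 * x * Mm x| ≤ 200 * x * Dd x := by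
    unfold Mm Dd
    rw [Finset.mul_sum, ← Finset.sum_sub_distrib, Finset.mul_sum]
    refine (Finset.abs_sum_le_sum_abs _ _).trans (Finset.sum_le_sum fun m hm => ?_)
    have hm0 : 0 < m := (Finset.mem_Ioc.mp hm).1
    have := selberg (log_div_nonneg hm).1
    have e : cc m * Wsel (x / m) - 2 * x * (cc m / m * log (x / m)) = cc m * (Wsel (x / m) - 2 * (x/m) * log (x/m)) := by
      field_simp
    rw [e, abs_mul, abs_of_nonneg (cc_nonneg m)]
    calc _ ≤ cc m * (200 * (x / m)) := by gcongr; exact cc_nonneg m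
      _ = _ := by field_simp
  have h3 : 0 ≤ ∑ n ∈ Ioc 0 ⌊x⌋₊, bb n * log n ∧ ∑ n ∈ Ioc 0 ⌊x⌋₊, bb n * log n ≤ log x * Bb x := by
    constructor
    · exact Finset.sum_nonneg fun n hn => mul_nonneg (bb_nonneg n) (Real.log_natCast_nonneg n)
    · unfold Bb
      rw [Finset.mul_sum]
      refine Finset.sum_le_sum fun n hn => ?_
      rw [mul_comm]
      have hn0 : 0 < n := (Finset.mem_Ioc.mp hn).1
      have := (log_div_nonneg hn).2
      rw [Real.log_div (by positivity) (by positivity)] at this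
      exact mul_le_mul_of_nonneg_right (by linarith) (bb_nonneg n)
  have h4 : 0 ≤ ∑ n ∈ Ioc 0 ⌊x⌋₊, bb n * ψ (x / n) ∧ ∑ n ∈ Ioc 0 ⌊x⌋₊, bb n * ψ (x / n) ≤ 6 * x * ∑ n ∈ Ioc 0 ⌊x⌋₊, bb n / n := by
    constructor
    · exact Finset.sum_nonneg fun n hn => mul_nonneg (bb_nonneg n) (Chebyshev.psi_nonneg _)
    · rw [Finset.mul_sum]
      refine Finset.sum_le_sum fun n hn => ?_
      have hn0 : 0 < n := (Finset.mem_Ioc.mp hn).1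
      calc _ ≤ bb n * (6 * (x / n)) := mul_le_mul_of_nonneg_left (psi_le6 (by positivity)) (bb_nonneg n)
        _ = _ := by field_simp
  have h5 : 0 ≤ Cn x * log x ^ 2 - ∑ n ∈ Ioc 0 ⌊x⌋₊, cc n * log n ^ 2 ∧ Cn x * log x ^ 2 - ∑ n ∈ Ioc 0 ⌊x⌋₊, cc n * log n ^ 2 ≤ 10 * x * log x := by
    unfold Cn
    rw [Finset.sum_mul, ← Finset.sum_sub_distrib]
    have key : ∀ n ∈ Ioc 0 ⌊x⌋₊, 0 ≤ cc n * log x ^ 2 - cc n * log n ^ 2 ∧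
        cc n * log x ^ 2 - cc n * log n ^ 2 ≤ 2 * log x * log (x / n) := by
      intro n hn
      have hn0 : 0 < n := (Finset.mem_Ioc.mp hn).1
      have h6 := (log_div_nonneg hn).2
      have h7 := Real.log_natCast_nonneg n
      have e : log (x / n) = log x - log n := Real.log_div (by positivity) (by positivity)
      have h8 : 0 ≤ log x ^ 2 - log n ^ 2 := by nlinarith
      rw [← mul_sub]
      refine ⟨mul_nonneg (cc_nonneg n) h8, ?_⟩
      have := cc_le_one n
      calc _ ≤ 1 * (log x ^ 2 - log n ^ 2) := by gcongr
        _ ≤ _ := by rw [e] at *; nlinarith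
    constructor
    · exact Finset.sum_nonneg fun n hn => (key n hn).1
    · refine (Finset.sum_le_sum fun n hn => (key n hn).2).trans ?_
      rw [← Finset.mul_sum]
      have := sum_log_div hx
      nlinarith
  rw [h1] at h2
  rw [abs_le] at h2 ⊢
  have : 0 ≤ log x * Bb x := h3.1.trans h3.2
  have : 0 ≤ 10 * x * log x := by positivity
  constructor <;> linarith [h2.1, h2.2, h3.1, h3.2, h4.1, h4.2, h5.1, h5.2]

end Part2

section Part3

open ArithmeticFunction (vonMangoldt moebius)

local notation "Λ" => ArithmeticFunction.vonMangoldt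
local notation "ψ" => Chebyshev.psi

lemma bt_prod_dvd (r m K : ℕ) (hrm : Nat.Coprime r m) (hm : m ∣ K.factorial) :
    m ∣ ∏ k ∈ range K, (1 + r * k) := by
  rw [← ZMod.natCast_eq_zero_iff]
  obtain ⟨s, hs⟩ : ∃ s : ℕ, (r * s : ZMod m) = 1 := by
    rcases Nat.eq_zero_or_pos m with rfl | h0
    · exact absurd (zero_dvd_iff.mp hm) (Nat.factorial_ne_zero K)
    have : NeZero m := ⟨h0.ne'⟩
    refine ⟨((r : ZMod m)⁻¹).val, ?_⟩
    rw [ZMod.natCast_zmod_val]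
    exact ZMod.coe_mul_inv_eq_one r hrm
  have h1 : m ∣ ∏ k ∈ range K, (s + k) := by
    refine hm.trans ?_
    rw [← Nat.ascFactorial_eq_prod_range]
    exact Nat.factorial_dvd_ascFactorial s K
  rw [← ZMod.natCast_eq_zero_iff] at h1
  push_cast at h1 ⊢
  calc ∏ k ∈ range K, (1 + (r:ZMod m) * k) = ∏ k ∈ range K, ((r:ZMod m) * (s + k)) := by
        refine Finset.prod_congr rfl fun k _ => ?_
        rw [mul_add, hs]
    _ = 0 := by rw [Finset.prod_mul_distrib, h1, mul_zero]

lemma bt_block (r K : ℕ) (hr : r.Prime) :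
    ∏ q ∈ (Ioc K (r * K)).filter (fun q => q.Prime ∧ r ∣ q - 1), q ≤ r ^ (2 * K) := by
  set S := (Ioc K (r * K)).filter (fun q => q.Prime ∧ r ∣ q - 1) with hS
  set v := (K.factorial).factorization r with hv
  set m := K.factorial / r ^ v with hm
  have hmK : r ^ v * m = K.factorial := Nat.ordProj_mul_ordCompl_eq_self _ _
  have hm0 : 0 < m := Nat.pos_of_ne_zero fun h => Nat.factorial_ne_zero K (by rw [← hmK, h, mul_zero])
  have hcop : Nat.Coprime r m := Nat.coprime_ordCompl hr (Nat.factorial_ne_zero K)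
  have h1 := bt_prod_dvd r m K hcop ⟨r ^ v, by rw [← hmK]; ring⟩
  have h2 : ∏ q ∈ S, q ∣ ∏ k ∈ range K, (1 + r * k) := by
    refine Finset.prod_primes_dvd _ (fun q hq => ?_) (fun q hq => ?_)
    · exact (Finset.mem_filter.mp hq).2.1.prime
    · obtain ⟨h3, h4, k, h5⟩ := Finset.mem_filter.mp hq
      have := h4.two_le
      have h6 := Finset.mem_Ioc.mp h3
      have h7 : q = 1 + r * k := by omega
      have hk : k < K := by
        by_contra hc
        have := Nat.mul_le_mul_left r (not_lt.mp hc)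
        omega
      rw [h7]
      exact Finset.dvd_prod_of_mem (fun k => 1 + r * k) (Finset.mem_range.mpr hk)
  have h3 : Nat.Coprime (∏ q ∈ S, q) m := by
    refine Nat.Coprime.prod_left fun q hq => ?_
    obtain ⟨h3, h4, _⟩ := Finset.mem_filter.mp hq
    rw [h4.coprime_iff_not_dvd]
    intro hd
    have : q ∣ K.factorial := hd.trans ⟨r ^ v, by rw [← hmK]; ring⟩
    rw [h4.dvd_factorial] at this
    have h6 := Finset.mem_Ioc.mp h3
    omega
  have h4 := h3.mul_dvd_of_dvd_of_dvd h2 h1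
  have h5 : ∏ k ∈ range K, (1 + r * k) ≤ r ^ K * K.factorial := by
    calc _ ≤ ∏ k ∈ range K, (r * (k + 1)) := by
          refine Finset.prod_le_prod' fun k _ => ?_
          have := hr.two_le
          nlinarith
      _ = _ := by rw [Finset.prod_mul_distrib, Finset.prod_range_add_one_eq_factorial]; simp
  have h6 : 0 < ∏ k ∈ range K, (1 + r * k) := Finset.prod_pos fun k _ => by positivity
  have h7 := (Nat.le_of_dvd h6 h4).trans h5
  have hvK : v ≤ K := by
    have : Fact r.Prime := ⟨hr⟩
    have h8 := sub_one_mul_padicValNat_factorial (p := r) K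
    rw [Nat.factorization_def _ hr] at hv
    rw [← hv] at h8
    have h9 : 1 ≤ r - 1 := by have := hr.two_le; omega
    nlinarith [Nat.sub_le K (r.digits K).sum]
  have h8 : (∏ q ∈ S, q) * m ≤ r ^ (K + v) * m := by
    calc _ ≤ _ := h7
      _ = _ := by rw [← hmK, pow_add]; ring
  calc _ ≤ r ^ (K + v) := Nat.le_of_mul_le_mul_right h8 hm0
    _ ≤ _ := Nat.pow_le_pow_right hr.pos (by omega)

noncomputable def th (r N : ℕ) : ℝ := ∑ q ∈ (Ioc 0 N).filter (fun q => q.Prime ∧ r ∣ q - 1), log q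

lemma bt_block_log (r K : ℕ) (hr : r.Prime) :
    ∑ q ∈ (Ioc K (r * K)).filter (fun q => q.Prime ∧ r ∣ q - 1), log q ≤ 2 * K * log r := by
  have h := bt_block r K hr
  rw [← Real.log_prod (fun q hq => by
    have := (Finset.mem_filter.mp hq).2.1.pos
    positivity)]
  have h1 : (∏ q ∈ (Ioc K (r * K)).filter (fun q => q.Prime ∧ r ∣ q - 1), (q:ℝ)) ≤ (r:ℝ) ^ (2 * K) := by
    have := (Nat.cast_le (α := ℝ)).mpr h
    rwa [Nat.cast_prod, Nat.cast_pow] at this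
  have h2 : 0 < (∏ q ∈ (Ioc K (r * K)).filter (fun q => q.Prime ∧ r ∣ q - 1), (q:ℝ)) :=
    Finset.prod_pos fun q hq => by
      have := (Finset.mem_filter.mp hq).2.1.pos
      positivity
  have h3 := Real.log_le_log h2 h1
  rw [Real.log_pow] at h3
  push_cast at h3
  exact h3

lemma th_zero (r N : ℕ) (h : N ≤ r) : th r N = 0 := by
  unfold th
  rw [Finset.sum_eq_zero]
  intro q hq
  obtain ⟨h3, h4, h5⟩ := Finset.mem_filter.mp hq
  have h6 := Finset.mem_Ioc.mp h3
  have := h4.two_le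
  have := Nat.le_of_dvd (by omega) h5
  omega

lemma th_le (r : ℕ) (hr : r.Prime) (N : ℕ) : th r N ≤ 18 * N * (log r / r) := by
  rcases hr.two_le.eq_or_lt with h2 | h3
  · have h : th r N ≤ 6 * N := by
      refine le_trans ?_ (psi_le6 (x := N) (by positivity))
      unfold th
      rw [Chebyshev.psi]
      simp only [Nat.floor_natCast]
      refine (Finset.sum_le_sum (g := fun q => Λ q) fun q hq => ?_).trans
        (Finset.sum_le_sum_of_subset_of_nonneg (Finset.filter_subset _ _)
          fun _ _ _ => ArithmeticFunction.vonMangoldt_nonneg)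
      rw [ArithmeticFunction.vonMangoldt_apply_prime (Finset.mem_filter.mp hq).2.1]
    rw [← h2] at h ⊢
    have := Real.log_two_gt_d9
    have h0 : (0:ℝ) ≤ N := by positivity
    push_cast
    nlinarith
  · induction N using Nat.strong_induction_on with
    | _ N ih =>
      have hlr : 0 ≤ log (r:ℝ) := Real.log_natCast_nonneg r
      have hr0 : (3:ℝ) ≤ r := by exact_mod_cast h3
      rcases le_or_gt N r with hN | hN
      · rw [th_zero r N hN]; positivity
      · set K := N / r + 1 with hK
        have h1 : N / r ≤ N / 3 := Nat.div_le_div_left h3 (by norm_num)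
        have h1' : 1 ≤ N / r := by rw [Nat.le_div_iff_mul_le hr.pos]; omega
        have hKN : K < N := by omega
        have h4 := ih K hKN
        have h5 : N ≤ r * K := by
          have := Nat.lt_mul_div_succ N hr.pos
          rw [hK]; exact this.le
        have h6 : th r N ≤ th r K + 2 * K * log r := by
          refine le_trans ?_ (add_le_add_right (bt_block_log r K hr) _)
          unfold th
          rw [← Finset.sum_union (Finset.disjoint_left.mpr ?_)]
          · refine Finset.sum_le_sum_of_subset_of_nonneg ?_ fun q _ _ => Real.log_natCast_nonneg q
            intro q
            simp only [Finset.mem_union, Finset.mem_filter, Finset.mem_Ioc]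
            intro h
            by_cases hq : q ≤ K
            · left; exact ⟨⟨h.1.1, hq⟩, h.2⟩
            · right; exact ⟨⟨by omega, by omega⟩, h.2⟩
          · intro q
            simp only [Finset.mem_filter, Finset.mem_Ioc]
            intro h h'
            omega
        have h7 : (K:ℝ) ≤ 2 * N / r := by
          have : (K * r : ℕ) ≤ 2 * N := by
            have := Nat.div_mul_le_self N r
            rw [hK]; nlinarith
          rw [le_div_iff₀ (by linarith)]
          exact_mod_cast this
        calc th r N ≤ 18 * K * (log r / r) + 2 * K * log r := by linarith
          _ ≤ 18 * K * (log r / 3) + 2 * K * log r := by gcongr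
          _ = 8 * log r * K := by ring
          _ ≤ 8 * log r * (2 * N / r) := by gcongr
          _ = 16 * N * (log r / r) := by ring
          _ ≤ _ := by gcongr; norm_num

end Part3

section Part4

lemma sum_dvd_le (P : ℕ → Prop) [DecidablePred P] (hP : ∀ a b, a ∣ b → P b → P a) (N d : ℕ) (hd : 0 < d) :
    ∑ b ∈ (Ioc 0 N).filter (fun b => P b ∧ d ∣ b), (1:ℝ) / b
      ≤ 1 / d * ∑ b ∈ (Ioc 0 N).filter P, (1:ℝ) / b := by
  rw [Finset.mul_sum]
  have h1 : ∑ b ∈ (Ioc 0 N).filter (fun b => P b ∧ d ∣ b), (1:ℝ) / b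
     = ∑ b ∈ ((Ioc 0 N).filter (fun b => P b ∧ d ∣ b)).image (fun b => b / d), 1 / (d:ℝ) * (1 / b) := by
    rw [Finset.sum_image]
    · refine Finset.sum_congr rfl fun b hb => ?_
      obtain ⟨_, _, k, rfl⟩ := Finset.mem_filter.mp hb
      rw [Nat.mul_div_cancel_left _ hd]
      push_cast
      rw [div_mul_div_comm, one_mul]
    · intro a ha b hb hab
      obtain ⟨_, _, k, rfl⟩ := Finset.mem_filter.mp ha
      obtain ⟨_, _, l, rfl⟩ := Finset.mem_filter.mp hb
      simp only [Nat.mul_div_cancel_left _ hd] at hab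
      rw [hab]
  rw [h1]
  refine Finset.sum_le_sum_of_subset_of_nonneg ?_ fun _ _ _ => by positivity
  intro b hb
  obtain ⟨a, ha, rfl⟩ := Finset.mem_image.mp hb
  obtain ⟨h2, h3, k, rfl⟩ := Finset.mem_filter.mp ha
  rw [Nat.mul_div_cancel_left _ hd]
  rw [Finset.mem_Ioc] at h2
  have hk : 0 < k := Nat.pos_of_ne_zero (by rintro rfl; simp at h2)
  refine Finset.mem_filter.mpr ⟨Finset.mem_Ioc.mpr ⟨hk, by nlinarith⟩, hP _ _ (dvd_mul_left k d) h3⟩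

def RoughN (w b : ℕ) : Prop := ∀ p, p.Prime → p ∣ b → w ≤ p

noncomputable instance (w : ℕ) : DecidablePred (RoughN w) := Classical.decPred _

lemma rough_dvd (w : ℕ) : ∀ a b, a ∣ b → RoughN w b → RoughN w a :=
  fun _ _ h1 h2 p hp hpa => h2 p hp (hpa.trans h1)

noncomputable def rho (w N : ℕ) : ℝ := ∑ b ∈ (Ioc 0 N).filter (RoughN w), (1:ℝ) / b

lemma rho_nonneg (w N : ℕ) : 0 ≤ rho w N := Finset.sum_nonneg fun _ _ => by positivity

lemma rho_step (w N : ℕ) (hw : 2 ≤ w) : (1 - 1 / (w:ℝ)) * rho w N ≤ rho (w + 1) N := by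
  have h1 : rho w N ≤ rho (w+1) N + 1 / w * rho w N := by
    refine le_trans ?_ (add_le_add_right (sum_dvd_le (RoughN w) (rough_dvd w) N w (by omega)) _)
    unfold rho
    refine le_trans (Finset.sum_le_sum_of_subset_of_nonneg
      (t := (Ioc 0 N).filter (RoughN (w+1)) ∪ (Ioc 0 N).filter (fun b => RoughN w b ∧ w ∣ b)) ?_ fun _ _ _ => by positivity) ?_
    · intro b hb
      obtain ⟨h2, h3⟩ := Finset.mem_filter.mp hb
      by_cases hwb : w ∣ b
      · exact Finset.mem_union_right _ (Finset.mem_filter.mpr ⟨h2, h3, hwb⟩)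
      · refine Finset.mem_union_left _ (Finset.mem_filter.mpr ⟨h2, fun p hp hpb => ?_⟩)
        have := h3 p hp hpb
        rcases this.eq_or_lt with h | h
        · exact absurd (h ▸ hpb) hwb
        · exact h
    · rw [← Finset.sum_union_inter]
      exact le_add_of_nonneg_right (Finset.sum_nonneg fun _ _ => by positivity)
  linarith

lemma rho_lower (w N : ℕ) (hw : 1 ≤ w) : rho 2 N / w ≤ rho (w + 1) N := by
  induction w, hw using Nat.le_induction with
  | base => simp
  | succ w hw ih =>
    refine le_trans ?_ (rho_step (w+1) N (by omega))
    have : (1:ℝ) - 1 / ((w+1 : ℕ):ℝ) = w / (w + 1) := by push_cast; field_simp; ring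
    rw [this]
    have hw0 : (0:ℝ) < w := by exact_mod_cast hw
    calc rho 2 N / ((w+1:ℕ):ℝ) = w / (w+1) * (rho 2 N / w) := by push_cast; field_simp
      _ ≤ _ := by gcongr

lemma rho_two (x : ℝ) (hx : 1 ≤ x) : log x ≤ rho 2 ⌊x⌋₊ := by
  have : rho 2 ⌊x⌋₊ = ∑ n ∈ Ioc 0 ⌊x⌋₊, (1:ℝ)/n := by
    unfold rho
    rw [Finset.filter_true_of_mem]
    intro b _ p hp _
    exact hp.two_le
  rw [this]
  have hx0 : 0 < x := by linarith
  have hlt : x ≤ (⌊x⌋₊ + 1 : ℕ) := by push_cast; exact (Nat.lt_floor_add_one x).le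
  have h2 := log_add_one_le_harmonic ⌊x⌋₊
  have hH : ∑ n ∈ Ioc 0 ⌊x⌋₊, (1:ℝ)/n = harmonic ⌊x⌋₊ := by
    rw [harmonic_eq_sum_Icc]
    push_cast
    rw [← Finset.Icc_add_one_left_eq_Ioc]
    simp
  rw [hH]
  exact (Real.log_le_log hx0 (by exact_mod_cast hlt)).trans (by exact_mod_cast h2)

noncomputable def YY (N : ℕ) : ℝ := 36 * (1 / log 2 + 2 * (log (log (N + 1)) - log (log 2)))

lemma sum_inv_log (N : ℕ) (hN : 1 ≤ N) : ∑ n ∈ Ioc 0 N, 1 / ((n:ℝ) * log (n + 1)) ≤ 1 / log 2 + 2 * (log (log (N + 1)) - log (log 2)) := by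
  induction N, hN using Nat.le_induction with
  | base => simp; norm_num
  | succ n hn ih =>
    rw [Finset.sum_Ioc_succ_top (by omega)]
    push_cast
    have hn' : (1:ℝ) ≤ n := by exact_mod_cast hn
    have l1 : 0 < log ((n:ℝ)+1) := Real.log_pos (by linarith)
    have l2 : 0 < log ((n:ℝ)+1+1) := Real.log_pos (by linarith)
    have h2 : 1 / ((n:ℝ)+1+1) ≤ log ((n:ℝ)+1+1) - log (n+1) := by
      rw [← Real.log_div (by positivity) (by positivity)]
      have := Real.one_sub_inv_le_log_of_pos (show (0:ℝ) < ((n:ℝ)+1+1)/(n+1) by positivity)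
      have e : 1 - (((n:ℝ)+1+1)/(n+1))⁻¹ = 1/(n+1+1) := by field_simp; ring
      linarith
    have h3 : (log ((n:ℝ)+1+1) - log (n+1)) / log ((n:ℝ)+1+1) ≤ log (log ((n:ℝ)+1+1)) - log (log (n+1)) := by
      rw [← Real.log_div l2.ne' l1.ne']
      have := Real.one_sub_inv_le_log_of_pos (show (0:ℝ) < log ((n:ℝ)+1+1) / log (n+1) by positivity)
      have e : 1 - (log ((n:ℝ)+1+1) / log (n+1))⁻¹ = (log ((n:ℝ)+1+1) - log (n+1)) / log ((n:ℝ)+1+1) := by field_simp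
      linarith
    have h4 : 1 / (((n:ℝ)+1) * log (n+1+1)) ≤ 2 * ((log ((n:ℝ)+1+1) - log (n+1)) / log ((n:ℝ)+1+1)) := by
      rw [← div_div, ← mul_div_assoc]
      gcongr
      have : 1 / ((n:ℝ)+1) ≤ 2 * (1 / ((n:ℝ)+1+1)) := by
        rw [mul_one_div, div_le_div_iff₀ (by positivity) (by positivity)]; linarith
      linarith
    linarith

lemma Tp_le (p N : ℕ) (hp : p.Prime) (hN : 1 ≤ N) :
    ∑ q ∈ (Ioc 0 N).filter (fun q => q.Prime ∧ p ∣ q - 1), (1:ℝ) / q ≤ log p / p * YY N := by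
  have h := abel_le (fun n => if n.Prime ∧ p ∣ n - 1 then log n else 0) (fun n => 1 / ((n:ℝ) * log (n + 1)))
    (18 * (log p / p)) 0 N ?_ ?_ ?_
  · have h1 : ∑ q ∈ (Ioc 0 N).filter (fun q => q.Prime ∧ p ∣ q - 1), (1:ℝ) / q ≤
       2 * ∑ i ∈ Ioc 0 N, (if i.Prime ∧ p ∣ i - 1 then log (i:ℝ) else 0) * (1 / ((i:ℝ) * log (i + 1))) := by
      rw [Finset.sum_filter, Finset.mul_sum]
      refine Finset.sum_le_sum fun q hq => ?_
      split_ifs with hc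
      · have h2 : (2:ℝ) ≤ q := by exact_mod_cast hc.1.two_le
        have l1 : 0 < log ((q:ℝ)) := Real.log_pos (by linarith)
        have l2 : 0 < log ((q:ℝ)+1) := Real.log_pos (by linarith)
        have l3 : log ((q:ℝ)+1) ≤ 2 * log q := by
          have : log ((q:ℝ)^2) = 2 * log q := by rw [Real.log_pow]; norm_num
          rw [← this]
          exact Real.log_le_log (by linarith) (by nlinarith)
        rw [mul_one_div, ← mul_div_assoc, div_le_div_iff₀ (by positivity) (by positivity)]
        nlinarith
      · simp
    have h2 := sum_inv_log N hN
    simp only [ite_self, zero_mul, add_zero] at h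
    have hl : 0 ≤ log (p:ℝ) / p := div_nonneg (Real.log_natCast_nonneg p) (by positivity)
    calc _ ≤ _ := h1
      _ ≤ 2 * (18 * (log p / p) * (1 / log 2 + 2 * (log (log (N + 1)) - log (log 2)))) := by
        refine mul_le_mul_of_nonneg_left (h.trans ?_) (by norm_num)
        gcongr
      _ = _ := by unfold YY; ring
  · intro n _
    rw [← Finset.sum_filter]
    have := th_le p hp n
    unfold th at this
    linarith
  · intro n hn _
    have : 0 ≤ log ((n:ℝ)+1) := Real.log_nonneg (by linarith [show (0:ℝ) ≤ n by positivity])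
    positivity
  · intro n hn _
    have hn' : (1:ℝ) ≤ n := by exact_mod_cast hn
    have : 0 < log ((n:ℝ)+1) := Real.log_pos (by linarith)
    push_cast
    have : log ((n:ℝ)+1) ≤ log ((n:ℝ)+1+1) := Real.log_le_log (by positivity) (by linarith)
    gcongr
    linarith

lemma tail_sq (w N : ℕ) (hw : 1 ≤ w) : ∑ n ∈ Ioc w N, 1 / (n:ℝ)^2 ≤ 1 / (w:ℝ) := by
  rcases le_or_gt N w with h | h
  · rw [Finset.Ioc_eq_empty_of_le h]; simp
  · have : ∑ n ∈ Ioc w N, 1 / (n:ℝ)^2 ≤ 1 / (w:ℝ) - 1 / (N:ℝ) := by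
      induction N, h.le using Nat.le_induction with
      | base => simp
      | succ n hn ih =>
        rcases hn.eq_or_lt with h | h
        · subst h
          rw [Finset.sum_Ioc_succ_top (by omega)]
          simp only [Finset.Ioc_self, Finset.sum_empty]
          have hw0 : (0:ℝ) < w := by exact_mod_cast hw
          push_cast
          rw [div_sub_div _ _ (by positivity) (by positivity), zero_add, div_le_div_iff₀ (by positivity) (by positivity)]
          nlinarith
        · have := ih (by omega)
          rw [Finset.sum_Ioc_succ_top (by omega)]
          have hw0 : (0:ℝ) < n := by exact_mod_cast (by omega : 0 < n)
          have : 1 / (((n+1:ℕ):ℝ))^2 ≤ 1 / n - 1 / ((n+1:ℕ):ℝ) := by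
            push_cast
            rw [div_sub_div _ _ (by positivity) (by positivity), div_le_div_iff₀ (by positivity) (by positivity)]
            nlinarith
          linarith
    have h2 : (0:ℝ) ≤ 1 / N := by positivity
    linarith

lemma log_le_two_sqrt (n : ℝ) (hn : 0 < n) : log n ≤ 2 * √n := by
  have h1 : 0 < √n := Real.sqrt_pos.mpr hn
  have h2 := Real.log_le_sub_one_of_pos h1
  rw [Real.log_sqrt hn.le] at h2
  linarith

lemma tail_log_sq (w N : ℕ) (hw : 1 ≤ w) : ∑ n ∈ Ioc w N, log (n:ℝ) / (n:ℝ)^2 ≤ 4 / √w := by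
  have key : ∀ n : ℕ, 1 ≤ n → log ((n:ℝ)+1) / ((n:ℝ)+1)^2 ≤ 4 / √n - 4 / √((n:ℝ)+1) := by
    intro n hn
    have hn' : (0:ℝ) < n := by exact_mod_cast hn
    have h0 := log_le_two_sqrt ((n:ℝ)+1) (by positivity)
    set a := √(n:ℝ) with ha
    set b := √((n:ℝ)+1) with hb
    have a0 : 0 < a := Real.sqrt_pos.mpr hn'
    have b0 : 0 < b := Real.sqrt_pos.mpr (by positivity)
    have a2 : a^2 = n := Real.sq_sqrt hn'.le
    have b2 : b^2 = n + 1 := Real.sq_sqrt (by positivity)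
    have hab : a ≤ b := Real.sqrt_le_sqrt (by linarith)
    rw [div_sub_div _ _ a0.ne' b0.ne']
    calc log ((n:ℝ)+1) / ((n:ℝ)+1)^2 ≤ 2 * b / ((n:ℝ)+1)^2 := by gcongr
      _ = 2 / b^3 := by rw [← b2]; field_simp
      _ ≤ _ := by
        rw [div_le_div_iff₀ (by positivity) (by positivity)]
        have : 1 ≤ 2 * b * (b - a) := by nlinarith [sq_nonneg (b-a)]
        have h3 : a * b ≤ b ^ 2 := by nlinarith
        have h4 : 2 * (a * b) ≤ 2 * b^2 * (2 * b * (b-a)) := by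
          have : 0 ≤ b^2 := by positivity
          nlinarith
        nlinarith
  have h2 : (0:ℝ) ≤ 4 / √N := by positivity
  rcases le_or_gt N w with h | h
  · rw [Finset.Ioc_eq_empty_of_le h]; simp only [Finset.sum_empty]; positivity
  · have : ∑ n ∈ Ioc w N, log (n:ℝ) / (n:ℝ)^2 ≤ 4 / √w - 4 / √N := by
      clear h2
      induction N, h.le using Nat.le_induction with
      | base => simp
      | succ n hn ih =>
        rcases hn.eq_or_lt with h | h
        · subst h
          rw [Finset.sum_Ioc_succ_top (by omega)]
          simpa using key w hw
        · have := ih (by omega)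
          rw [Finset.sum_Ioc_succ_top (by omega)]
          have := key n (by omega)
          push_cast
          linarith
    linarith

lemma Finset.sum_union_le {s t : Finset ℕ} {f : ℕ → ℝ} (hf : ∀ b, 0 ≤ f b) :
    ∑ b ∈ s ∪ t, f b ≤ ∑ b ∈ s, f b + ∑ b ∈ t, f b := by
  rw [← Finset.sum_union_inter]
  exact le_add_of_nonneg_right (Finset.sum_nonneg fun _ _ => hf _)

lemma Finset.sum_biUnion_le_sum_sum {s : Finset ℕ} {t : ℕ → Finset ℕ} {f : ℕ → ℝ} (hf : ∀ b, 0 ≤ f b) :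
    ∑ b ∈ s.biUnion t, f b ≤ ∑ a ∈ s, ∑ b ∈ t a, f b := by
  classical
  induction s using Finset.induction_on with
  | empty => simp
  | insert a s ha ih =>
    rw [Finset.biUnion_insert, Finset.sum_insert ha]
    exact (Finset.sum_union_le hf).trans (by linarith)

lemma noncyc_rough (w N : ℕ) (hN : 1 ≤ N) (hw : 1 ≤ w) :
    ∑ b ∈ (Ioc 0 N).filter (fun b => RoughN (w+1) b ∧ ¬ IsCyclicNum b), (1:ℝ) / b
      ≤ (1 / w + 4 / √w * YY N) * rho (w + 1) N := by
  classical
  set P := RoughN (w+1) with hP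
  have hY : 0 ≤ YY N := by
    have := Tp_le 2 N Nat.prime_two hN
    have h1 : 0 ≤ ∑ q ∈ (Ioc 0 N).filter (fun q => q.Prime ∧ 2 ∣ q - 1), (1:ℝ) / q :=
      Finset.sum_nonneg fun _ _ => by positivity
    have h2 : 0 < log ((2:ℕ):ℝ) / ((2:ℕ):ℝ) := div_pos (Real.log_pos (by norm_num)) (by norm_num)
    by_contra hc
    have := mul_neg_of_pos_of_neg h2 (not_le.mp hc)
    linarith
  set U := (Ioc w N).filter Nat.Prime with hU
  set V := fun p : ℕ => (Ioc 0 N).filter (fun q => q.Prime ∧ p ∣ q - 1) with hV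
  have hsub : (Ioc 0 N).filter (fun b => P b ∧ ¬ IsCyclicNum b) ⊆
      (U.biUnion fun p => (Ioc 0 N).filter (fun b => P b ∧ p * p ∣ b)) ∪
      (U.biUnion fun p => (V p).biUnion fun q => (Ioc 0 N).filter (fun b => P b ∧ p * q ∣ b)) := by
    intro b hb
    obtain ⟨h1, h2, h3⟩ := Finset.mem_filter.mp hb
    obtain ⟨h4, h5⟩ := Finset.mem_Ioc.mp h1
    rw [cyc_iff h4] at h3
    have hmem : ∀ p, p.Prime → p ∣ b → p ∈ U := by
      intro p hp hpb
      refine Finset.mem_filter.mpr ⟨Finset.mem_Ioc.mpr ⟨h2 p hp hpb, (Nat.le_of_dvd h4 hpb).trans h5⟩, hp⟩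
    by_cases hs : Squarefree b
    · have h3' : ∃ p q : ℕ, p.Prime ∧ q.Prime ∧ p ∣ b ∧ q ∣ b ∧ p ∣ q - 1 := by
        by_contra hc
        push Not at hc
        exact h3 ⟨hs, hc⟩
      obtain ⟨p, q, hp, hq, hpb, hqb, hpq⟩ := h3'
      refine Finset.mem_union_right _ ?_
      simp only [Finset.mem_biUnion]
      have hqN := (Nat.le_of_dvd h4 hqb).trans h5
      refine ⟨p, hmem p hp hpb, q, Finset.mem_filter.mpr ⟨Finset.mem_Ioc.mpr ⟨hq.pos, hqN⟩, hq, hpq⟩, Finset.mem_filter.mpr ⟨h1, h2, ?_⟩⟩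
      refine Nat.Coprime.mul_dvd_of_dvd_of_dvd ?_ hpb hqb
      rw [Nat.coprime_primes hp hq]
      rintro rfl
      have := Nat.le_of_dvd (by have := hp.two_le; omega) hpq
      have := hp.two_le
      omega
    · rw [Nat.squarefree_iff_prime_squarefree] at hs
      push Not at hs
      obtain ⟨p, hp, hpb⟩ := hs
      refine Finset.mem_union_left _ ?_
      simp only [Finset.mem_biUnion]
      exact ⟨p, hmem p hp ((dvd_mul_right p p).trans hpb), Finset.mem_filter.mpr ⟨h1, h2, hpb⟩⟩
  have hr := rho_nonneg (w+1) N
  have hpos : ∀ b : ℕ, (0:ℝ) ≤ 1 / b := fun b => by positivity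
  have hA : ∀ p ∈ U, ∑ b ∈ (Ioc 0 N).filter (fun b => P b ∧ p * p ∣ b), (1:ℝ) / b ≤ 1 / (p:ℝ)^2 * rho (w+1) N := by
    intro p hp
    have hp0 := (Finset.mem_filter.mp hp).2.pos
    have := sum_dvd_le P (rough_dvd (w+1)) N (p*p) (by positivity)
    rw [pow_two]; exact_mod_cast this
  have hB : ∀ p ∈ U, ∑ b ∈ (V p).biUnion (fun q => (Ioc 0 N).filter (fun b => P b ∧ p * q ∣ b)), (1:ℝ) / b ≤ log p / (p:ℝ)^2 * (YY N * rho (w+1) N) := by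
    intro p hp
    have hpp := (Finset.mem_filter.mp hp).2
    have hp0 := hpp.pos
    refine (Finset.sum_biUnion_le_sum_sum hpos).trans ?_
    calc _ ≤ ∑ q ∈ V p, 1 / (q:ℝ) * (1 / p * rho (w+1) N) := by
          refine Finset.sum_le_sum fun q hq => ?_
          have hq0 := (Finset.mem_filter.mp hq).2.1.pos
          have := sum_dvd_le P (rough_dvd (w+1)) N (p*q) (by positivity)
          refine this.trans (le_of_eq ?_)
          push_cast
          unfold rho
          field_simp
          rfl
      _ = (∑ q ∈ V p, 1 / (q:ℝ)) * (1 / p * rho (w+1) N) := by rw [Finset.sum_mul]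
      _ ≤ (log p / p * YY N) * (1 / p * rho (w+1) N) := by
          gcongr
          exact Tp_le p N hpp hN
      _ = _ := by field_simp
  calc _ ≤ _ := Finset.sum_le_sum_of_subset_of_nonneg hsub fun b _ _ => hpos b
    _ ≤ _ := Finset.sum_union_le hpos
    _ ≤ (∑ p ∈ U, 1 / (p:ℝ)^2 * rho (w+1) N) + ∑ p ∈ U, log p / (p:ℝ)^2 * (YY N * rho (w+1) N) := by
        refine add_le_add ?_ ?_
        · exact (Finset.sum_biUnion_le_sum_sum hpos).trans (Finset.sum_le_sum hA)
        · exact (Finset.sum_biUnion_le_sum_sum hpos).trans (Finset.sum_le_sum hB)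
    _ ≤ 1 / w * rho (w+1) N + 4 / √w * (YY N * rho (w+1) N) := by
        rw [← Finset.sum_mul, ← Finset.sum_mul]
        gcongr
        · exact (Finset.sum_le_sum_of_subset_of_nonneg (Finset.filter_subset _ _) fun _ _ _ => by positivity).trans (tail_sq w N hw)
        · exact (Finset.sum_le_sum_of_subset_of_nonneg (Finset.filter_subset _ _) fun n _ _ => div_nonneg (Real.log_natCast_nonneg n) (by positivity)).trans (tail_log_sq w N hw)
    _ = _ := by ring


lemma Dd_lower_aux (x : ℝ) (hx : 1 ≤ x) (w : ℕ) (hw : 4 ≤ w) (hY : 16 * YY ⌊x⌋₊ ≤ √w) :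
    log x / (2 * w) ≤ Dd x := by
  classical
  have hw0 : (4:ℝ) ≤ w := by exact_mod_cast hw
  have h1 := noncyc_rough w ⌊x⌋₊ (floor_pos' hx) (by omega)
  have h2 := rho_lower w ⌊x⌋₊ (by omega)
  have h3 := rho_two x hx
  have hr := rho_nonneg (w+1) ⌊x⌋₊
  have hs : 0 < √(w:ℝ) := Real.sqrt_pos.mpr (by linarith)
  have h4 : 1 / (w:ℝ) + 4 / √w * YY ⌊x⌋₊ ≤ 1 / 2 := by
    have a : 1 / (w:ℝ) ≤ 1 / 4 := by gcongr
    have b : 4 / √(w:ℝ) * YY ⌊x⌋₊ ≤ 1 / 4 := by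
      rw [div_mul_eq_mul_div, div_le_iff₀ hs]; linarith
    linarith
  have h5 : rho (w+1) ⌊x⌋₊ ≤ Dd x + ∑ b ∈ (Ioc 0 ⌊x⌋₊).filter (fun b => RoughN (w+1) b ∧ ¬ IsCyclicNum b), (1:ℝ) / b := by
    unfold rho Dd
    rw [Finset.sum_filter, Finset.sum_filter, ← Finset.sum_add_distrib]
    refine Finset.sum_le_sum fun b hb => ?_
    have : (0:ℝ) ≤ 1 / b := by positivity
    unfold cc
    by_cases c1 : RoughN (w+1) b <;> by_cases c2 : IsCyclicNum b <;> simp [c1, c2]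
  have h6 : rho (w+1) ⌊x⌋₊ ≤ 2 * Dd x := by nlinarith
  calc log x / (2 * w) = (log x / w) / 2 := by field_simp
    _ ≤ (rho 2 ⌊x⌋₊ / w) / 2 := by gcongr
    _ ≤ _ := by linarith

lemma YY_le (x : ℝ) (hx : 3 ≤ x) : YY ⌊x⌋₊ ≤ 200 * (1 + log (log x)) := by
  unfold YY
  have hx0 : 0 < x := by linarith
  have l3 : 1 ≤ log x := by
    rw [Real.le_log_iff_exp_le hx0]
    linarith [Real.exp_one_lt_d9]
  have l2 := Real.log_two_gt_d9
  have l2' := Real.log_two_lt_d9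
  have h1 : log ((⌊x⌋₊:ℝ) + 1) ≤ 2 * log x := by
    have : log (x^2) = 2 * log x := by rw [Real.log_pow]; norm_num
    rw [← this]
    refine Real.log_le_log (by positivity) ?_
    have := Nat.floor_le hx0.le
    nlinarith
  have hf : (3:ℝ) ≤ ⌊x⌋₊ := by exact_mod_cast Nat.le_floor (by exact_mod_cast hx)
  have h0 : 0 < log ((⌊x⌋₊:ℝ) + 1) := Real.log_pos (by linarith)
  have h2 := Real.log_le_log h0 h1
  rw [Real.log_mul (by norm_num) (by linarith)] at h2
  have h3 : 0 ≤ log (log x) := Real.log_nonneg l3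
  have h4 : 1 / log 2 ≤ 1.45 := by
    rw [div_le_iff₀ (by linarith)]; linarith
  have h5 : -log (log 2) ≤ 1 / log 2 - 1 := by
    rw [← Real.log_inv]
    have := Real.log_le_sub_one_of_pos (show 0 < (log 2)⁻¹ by positivity)
    rw [one_div]; exact this
  nlinarith

lemma Dd_lower (κ : ℝ) (hκ : 0 < κ) : ∀ᶠ x : ℝ in atTop, log x ^ (1 - κ) ≤ Dd x := by
  -- w = ⌈(3200 (1 + loglog x))^2⌉ + 4
  have hll : Tendsto (fun t : ℝ => (2 * ((3200 * (1 + log t))^2 + 5)) / t ^ κ) atTop (nhds 0) := by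
    have e1 : (fun t : ℝ => (1:ℝ)) =o[atTop] (fun t : ℝ => t ^ (κ/2)) := by
      rw [isLittleO_one_left_iff]
      exact tendsto_norm_atTop_atTop.comp (tendsto_rpow_atTop (by positivity))
    have e2 := isLittleO_log_rpow_atTop (show 0 < κ / 2 by positivity)
    have e3 := ((e1.add e2).const_mul_left 3200).pow (n := 2) (by norm_num)
    have e4 := (e1.const_mul_left 5)
    have e5 : (fun t : ℝ => (5:ℝ) * 1) =o[atTop] (fun t : ℝ => (t ^ (κ/2))^2) := by
      have := (e1.pow (n := 2) (by norm_num)).const_mul_left 5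
      simpa using this
    have e6 := (e3.add e5).const_mul_left 2
    have e7 : (fun t : ℝ => (t ^ (κ/2))^2) =ᶠ[atTop] fun t => t ^ κ := by
      filter_upwards [eventually_gt_atTop 0] with t ht
      rw [← Real.rpow_natCast, ← Real.rpow_mul ht.le]; congr 1; push_cast; ring
    have e8 := (e6.trans_eventuallyEq e7).tendsto_div_nhds_zero
    simpa using e8
  have h1 := (hll.comp Real.tendsto_log_atTop).eventually (gt_mem_nhds (show (0:ℝ) < 1 by norm_num))
  filter_upwards [h1, eventually_ge_atTop 3] with x hx hx3
  have hx0 : 0 < x := by linarith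
  have l3 : 1 ≤ log x := by
    rw [Real.le_log_iff_exp_le hx0]
    linarith [Real.exp_one_lt_d9]
  simp only [Function.comp] at hx
  set t := log x with ht
  have h3 : 0 ≤ log t := Real.log_nonneg l3
  set z := 3200 * (1 + log t) with hz
  have hw := Dd_lower_aux x (by linarith) (⌈z^2⌉₊ + 4) (by omega) ?_
  · refine le_trans ?_ hw
    have htp : 0 < t ^ κ := by positivity
    rw [div_lt_one htp] at hx
    have hc : (⌈z^2⌉₊:ℝ) < z^2 + 1 := Nat.ceil_lt_add_one (by positivity)
    rw [Real.rpow_sub (by linarith), Real.rpow_one]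
    push_cast
    gcongr
    linarith
  · have := YY_le x hx3
    refine le_trans (by linarith : 16 * YY ⌊x⌋₊ ≤ z) ?_
    apply Real.le_sqrt_of_sq_le
    push_cast
    have := Nat.le_ceil (z^2)
    linarith

end Part4

section Part5

local notation "Λ" => ArithmeticFunction.vonMangoldt

lemma conv_le_fin (u v wf : ℕ → ℝ) (hu : ∀ n, 0 ≤ u n) (hv : ∀ n, 0 ≤ v n)
    (h : ∀ a, 0 < a → ∑ d ∈ a.divisorsAntidiagonal, u d.1 * v d.2 ≤ wf a) (X : ℕ) :
    (∑ m ∈ Ioc 0 X, u m) * (∑ m ∈ Ioc 0 X, v m) ≤ ∑ a ∈ Ioc 0 (X * X), wf a := by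
  have h1 := sum_conv (fun m k => u m * v k) ((X * X : ℕ) : ℝ)
  rw [Nat.floor_natCast] at h1
  refine le_trans ?_ ((h1.symm.le).trans (Finset.sum_le_sum fun a ha => h a (Finset.mem_Ioc.mp ha).1))
  rw [Finset.sum_mul]
  refine le_trans ?_ (Finset.sum_le_sum_of_subset_of_nonneg (s := Ioc 0 X) ?_ ?_)
  · refine Finset.sum_le_sum fun m hm => ?_
    rw [← Finset.mul_sum]
    refine mul_le_mul_of_nonneg_left (Finset.sum_le_sum_of_subset_of_nonneg ?_ fun _ _ _ => hv _) (hu m)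
    refine Finset.Ioc_subset_Ioc_right ?_
    obtain ⟨h2, h3⟩ := Finset.mem_Ioc.mp hm
    rw [Nat.floor_div_natCast, Nat.floor_natCast, Nat.le_div_iff_mul_le h2]
    exact Nat.mul_le_mul_left X h3
  · exact Finset.Ioc_subset_Ioc_right (Nat.le_mul_self X)
  · intro m _ _
    exact Finset.sum_nonneg fun k _ => mul_nonneg (hu m) (hv k)

lemma sum_Ioc_tendsto (u : ℕ → ℝ) (hs : Summable u) (h0 : u 0 = 0) :
    Tendsto (fun X => ∑ m ∈ Ioc 0 X, u m) atTop (nhds (∑' n, u n)) := by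
  have h1 := (hs.hasSum.tendsto_sum_nat).comp (tendsto_add_atTop_nat 1)
  refine h1.congr fun X => ?_
  simp only [Function.comp]
  rw [Finset.sum_range_succ', h0, add_zero, Finset.range_eq_Ico, Finset.sum_Ico_add' u 0 X 1]
  rfl

lemma conv_le (u v wf : ℕ → ℝ) (hu : ∀ n, 0 ≤ u n) (hv : ∀ n, 0 ≤ v n) (hw : ∀ n, 0 ≤ wf n)
    (h : ∀ a, 0 < a → ∑ d ∈ a.divisorsAntidiagonal, u d.1 * v d.2 ≤ wf a)
    (su : Summable u) (sv : Summable v) (sw : Summable wf) (u0 : u 0 = 0) (v0 : v 0 = 0) :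
    (∑' n, u n) * (∑' n, v n) ≤ ∑' n, wf n := by
  refine le_of_tendsto ((sum_Ioc_tendsto u su u0).mul (sum_Ioc_tendsto v sv v0)) ?_
  refine Eventually.of_forall fun X => ?_
  exact (conv_le_fin u v wf hu hv h X).trans (sw.sum_le_tsum _ fun _ _ => hw _)

lemma zeta_fin (δ : ℝ) (hδ : 0 < δ) (N : ℕ) (hN : 1 ≤ N) :
    ∑ n ∈ Ioc 0 N, 1 / (n:ℝ) ^ (1 + δ) ≤ 1 + 1 / δ - 1 / δ * (1 / (N:ℝ) ^ δ) := by
  induction N, hN using Nat.le_induction with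
  | base => simp
  | succ n hn ih =>
    rw [Finset.sum_Ioc_succ_top (by omega)]
    have hn' : (0:ℝ) < n := by exact_mod_cast hn
    push_cast
    have h2 : 1 / ((n:ℝ)+1) ≤ log ((n:ℝ)+1) - log n := by
      rw [← Real.log_div (by positivity) (by positivity)]
      have := Real.one_sub_inv_le_log_of_pos (show (0:ℝ) < (n+1)/n by positivity)
      have e : 1 - (((n:ℝ)+1)/n)⁻¹ = 1/(n+1) := by field_simp; ring
      linarith
    have ha : (0:ℝ) < (n:ℝ)^δ := by positivity
    have hb : (0:ℝ) < ((n:ℝ)+1)^δ := by positivity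
    have h3 : 1 + δ * (1 / ((n:ℝ)+1)) ≤ ((n:ℝ)+1)^δ / (n:ℝ)^δ := by
      rw [← Real.div_rpow (by positivity) (by positivity), Real.rpow_def_of_pos (by positivity),
        Real.log_div (by positivity) (by positivity)]
      have := Real.add_one_le_exp ((log ((n:ℝ)+1) - log n) * δ)
      nlinarith
    have h4 : 1 / ((n:ℝ)+1)^(1+δ) ≤ 1 / δ * (1 / (n:ℝ)^δ) - 1 / δ * (1 / ((n:ℝ)+1)^δ) := by
      rw [Real.rpow_add (by positivity), Real.rpow_one, ← mul_sub]
      have : 1 / (n:ℝ)^δ - 1 / ((n:ℝ)+1)^δ = (((n:ℝ)+1)^δ / (n:ℝ)^δ - 1) * (1 / ((n:ℝ)+1)^δ) := by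
        field_simp
      rw [this]
      calc 1 / (((n:ℝ)+1) * ((n:ℝ)+1)^δ) = 1 / δ * ((δ * (1 / ((n:ℝ)+1))) * (1 / ((n:ℝ)+1)^δ)) := by field_simp
        _ ≤ _ := by gcongr; linarith
    linarith

lemma zeta_summable (δ : ℝ) (hδ : 0 < δ) : Summable (fun n : ℕ => 1 / (n:ℝ) ^ (1 + δ)) :=
  Real.summable_one_div_nat_rpow.mpr (by linarith)

lemma zeta_le (δ : ℝ) (hδ : 0 < δ) : ∑' n : ℕ, 1 / (n:ℝ) ^ (1 + δ) ≤ 1 + 1 / δ := by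
  refine le_of_tendsto (sum_Ioc_tendsto _ (zeta_summable δ hδ) ?_) ?_
  · simp [Real.zero_rpow (show 1 + δ ≠ 0 by linarith)]
  · filter_upwards [eventually_ge_atTop 1] with N hN
    have := zeta_fin δ hδ N hN
    have h2 : 0 ≤ 1 / δ * (1 / (N:ℝ) ^ δ) := by positivity
    linarith

lemma log_zeta_summable (δ : ℝ) (hδ : 0 < δ) : Summable (fun n : ℕ => log n / (n:ℝ) ^ (1 + δ)) := by
  refine Summable.of_nonneg_of_le (fun n => div_nonneg (Real.log_natCast_nonneg n) (by positivity)) (fun n => ?_)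
    ((zeta_summable (δ/2) (by positivity)).mul_left (1 / (δ/2)))
  rcases Nat.eq_zero_or_pos n with rfl | hn
  · simp [Real.zero_rpow (show 1 + δ/2 ≠ 0 by linarith)]
  · have hn' : (0:ℝ) < n := by exact_mod_cast hn
    have := Real.log_le_rpow_div hn'.le (show 0 < δ/2 by positivity)
    have e : (n:ℝ)^(1+δ) = (n:ℝ)^(1+δ/2) * (n:ℝ)^(δ/2) := by
      rw [← Real.rpow_add hn']; congr 1; ring
    rw [e, div_le_iff₀ (by positivity)]
    refine this.trans (le_of_eq ?_)
    field_simp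

/-- all prime factors are `1 mod r` -/
def AllOne (r a : ℕ) : Prop := 0 < a ∧ ∀ p, p.Prime → p ∣ a → r ∣ p - 1
noncomputable instance (r : ℕ) : DecidablePred (AllOne r) := Classical.decPred _

noncomputable def hh (r a : ℕ) : ℝ := if AllOne r a then 1 else 0
lemma hh_nonneg (r a : ℕ) : 0 ≤ hh r a := by unfold hh; split_ifs <;> norm_num
lemma hh_le_one (r a : ℕ) : hh r a ≤ 1 := by unfold hh; split_ifs <;> norm_num
lemma hh_zero (r : ℕ) : hh r 0 = 0 := by simp [hh, AllOne]
lemma hh_one (r : ℕ) : hh r 1 = 1 := by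
  unfold hh; rw [if_pos]
  exact ⟨one_pos, fun p hp h => absurd h hp.not_dvd_one⟩

noncomputable def Hs (r : ℕ) (δ : ℝ) : ℝ := ∑' a : ℕ, hh r a / (a:ℝ) ^ (1 + δ)

lemma Hs_summable (r : ℕ) (δ : ℝ) (hδ : 0 < δ) : Summable fun a : ℕ => hh r a / (a:ℝ) ^ (1 + δ) := by
  refine Summable.of_nonneg_of_le (fun n => div_nonneg (hh_nonneg r n) (by positivity)) (fun n => ?_) (zeta_summable δ hδ)
  gcongr
  exact hh_le_one r n

lemma Hs_one_le (r : ℕ) (δ : ℝ) (hδ : 0 < δ) : 1 ≤ Hs r δ := by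
  have := (Hs_summable r δ hδ).le_tsum 1 fun n _ => div_nonneg (hh_nonneg r n) (by positivity)
  simpa [hh_one, Hs] using this

noncomputable def pp (r n : ℕ) : ℝ := if n.Prime ∧ r ∣ n - 1 then log n else 0
lemma pp_nonneg (r n : ℕ) : 0 ≤ pp r n := by
  unfold pp; split_ifs; exacts [Real.log_natCast_nonneg n, le_rfl]
lemma pp_le_log (r n : ℕ) : pp r n ≤ log n := by
  unfold pp; split_ifs; exacts [le_rfl, Real.log_natCast_nonneg n]
lemma pp_le_mangoldt (r n : ℕ) : pp r n ≤ Λ n := by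
  unfold pp; split_ifs with h
  · rw [ArithmeticFunction.vonMangoldt_apply_prime h.1]
  · exact ArithmeticFunction.vonMangoldt_nonneg

noncomputable def Ps (r : ℕ) (δ : ℝ) : ℝ := ∑' n : ℕ, pp r n / (n:ℝ) ^ (1 + δ)
lemma Ps_summable (r : ℕ) (δ : ℝ) (hδ : 0 < δ) : Summable fun a : ℕ => pp r a / (a:ℝ) ^ (1 + δ) := by
  refine Summable.of_nonneg_of_le (fun n => div_nonneg (pp_nonneg r n) (by positivity)) (fun n => ?_) (log_zeta_summable δ hδ)
  gcongr
  exact pp_le_log r n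

lemma antidiag_rpow (f g : ℕ → ℝ) (a : ℕ) (s : ℝ) :
    ∑ d ∈ a.divisorsAntidiagonal, (f d.1 / (d.1:ℝ)^s) * (g d.2 / (d.2:ℝ)^s)
      = (∑ d ∈ a.divisorsAntidiagonal, f d.1 * g d.2) / (a:ℝ)^s := by
  rw [Finset.sum_div]
  refine Finset.sum_congr rfl fun d hd => ?_
  obtain ⟨h3, h4⟩ := Nat.mem_divisorsAntidiagonal.mp hd
  rw [← h3]; push_cast
  rw [Real.mul_rpow (by positivity) (by positivity), div_mul_div_comm]

lemma Ps_mul_Hs (r : ℕ) (δ : ℝ) (hδ : 0 < δ) :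
    Ps r δ * Hs r δ ≤ ∑' a : ℕ, hh r a * log a / (a:ℝ) ^ (1 + δ) := by
  have hl : Summable fun a : ℕ => hh r a * log a / (a:ℝ) ^ (1 + δ) := by
    refine Summable.of_nonneg_of_le (fun n => div_nonneg (mul_nonneg (hh_nonneg r n) (Real.log_natCast_nonneg n)) (by positivity)) (fun n => ?_) (log_zeta_summable δ hδ)
    gcongr
    exact mul_le_of_le_one_left (Real.log_natCast_nonneg n) (hh_le_one r n)
  refine conv_le _ _ _ (fun n => div_nonneg (pp_nonneg r n) (by positivity))
    (fun n => div_nonneg (hh_nonneg r n) (by positivity))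
    (fun n => div_nonneg (mul_nonneg (hh_nonneg r n) (Real.log_natCast_nonneg n)) (by positivity))
    ?_ (Ps_summable r δ hδ) (Hs_summable r δ hδ) hl (by simp [pp]) (by simp [hh_zero])
  intro a ha
  rw [antidiag_rpow]
  gcongr
  have h1 : ∑ d ∈ a.divisorsAntidiagonal, pp r d.1 * hh r d.2 ≤ ∑ d ∈ a.divisorsAntidiagonal, hh r a * Λ d.1 := by
    refine Finset.sum_le_sum fun d hd => ?_
    obtain ⟨h3, h4⟩ := Nat.mem_divisorsAntidiagonal.mp hd
    have hnn : 0 ≤ hh r a * Λ d.1 := mul_nonneg (hh_nonneg r a) ArithmeticFunction.vonMangoldt_nonneg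
    by_cases c1 : d.1.Prime ∧ r ∣ d.1 - 1
    · by_cases c2 : AllOne r d.2
      · have : AllOne r a := by
          refine ⟨ha, fun p hp hpa => ?_⟩
          rw [← h3, hp.dvd_mul] at hpa
          rcases hpa with h | h
          · rw [(Nat.prime_dvd_prime_iff_eq hp c1.1).mp h]; exact c1.2
          · exact c2.2 p hp h
        have e1 : hh r a = 1 := by simp [hh, this]
        have e2 : hh r d.2 = 1 := by simp [hh, c2]
        rw [e1, e2, one_mul, mul_one]
        exact pp_le_mangoldt r d.1
      · have e2 : hh r d.2 = 0 := by simp [hh, c2]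
        rw [e2, mul_zero]; exact hnn
    · have e2 : pp r d.1 = 0 := by simp [pp, c1]
      rw [e2, zero_mul]; exact hnn
  refine h1.trans (le_of_eq ?_)
  rw [← Finset.mul_sum, antidiag_fst]

lemma Hs_step (r : ℕ) (δ : ℝ) (hδ : 0 < δ) :
    Hs r (2 * δ) * (1 + δ * Ps r (2 * δ)) ≤ Hs r δ := by
  have h1 := Ps_mul_Hs r (2 * δ) (by positivity)
  have hl : Summable fun a : ℕ => hh r a * log a / (a:ℝ) ^ (1 + 2 * δ) := by
    refine Summable.of_nonneg_of_le (fun n => div_nonneg (mul_nonneg (hh_nonneg r n) (Real.log_natCast_nonneg n)) (by positivity)) (fun n => ?_) (log_zeta_summable (2*δ) (by positivity))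
    gcongr
    exact mul_le_of_le_one_left (Real.log_natCast_nonneg n) (hh_le_one r n)
  have h2 : Hs r (2*δ) + δ * ∑' a : ℕ, hh r a * log a / (a:ℝ) ^ (1 + 2 * δ) ≤ Hs r δ := by
    unfold Hs
    rw [← tsum_mul_left, ← (Hs_summable r (2*δ) (by positivity)).tsum_add (hl.mul_left δ)]
    refine Summable.tsum_le_tsum (fun a => ?_) ((Hs_summable r (2*δ) (by positivity)).add (hl.mul_left δ)) (Hs_summable r δ hδ)
    rcases Nat.eq_zero_or_pos a with rfl | ha
    · simp [hh_zero]
    · have ha' : (0:ℝ) < a := by exact_mod_cast ha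
      have e : (a:ℝ)^(1+2*δ) = (a:ℝ)^(1+δ) * (a:ℝ)^δ := by
        rw [← Real.rpow_add ha']; congr 1; ring
      have h3 : 1 + δ * log a ≤ (a:ℝ)^δ := by
        rw [Real.rpow_def_of_pos ha']
        have := Real.add_one_le_exp (log (a:ℝ) * δ)
        linarith
      have hp : (0:ℝ) < (a:ℝ)^(1+δ) := by positivity
      have hp' : (0:ℝ) < (a:ℝ)^δ := by positivity
      rw [e]
      calc hh r a / ((a:ℝ)^(1+δ) * (a:ℝ)^δ) + δ * (hh r a * log a / ((a:ℝ)^(1+δ) * (a:ℝ)^δ))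
          = hh r a * (1 + δ * log a) / ((a:ℝ)^(1+δ) * (a:ℝ)^δ) := by ring
        _ ≤ hh r a * (a:ℝ)^δ / ((a:ℝ)^(1+δ) * (a:ℝ)^δ) := by gcongr; exact hh_nonneg r a
        _ = _ := by field_simp
  nlinarith

lemma Ps_lower (r : ℕ) (hr : r.Prime) : ∃ c C : ℝ, 0 < c ∧ 0 < C ∧ ∀ δ : ℝ, 0 < δ → δ ≤ 1 →
    c / δ - C ≤ Ps r δ := by
  have : NeZero r := ⟨hr.ne_zero⟩
  obtain ⟨C, hC⟩ := ArithmeticFunction.vonMangoldt.LSeries_residueClass_lower_bound (q := r) (a := 1) isUnit_one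
  have hs := ArithmeticFunction.vonMangoldt.summable_residueClass_non_primes_div (q := r) (a := 1)
  set C' := ∑' n : ℕ, (if n.Prime then 0 else ArithmeticFunction.vonMangoldt.residueClass (1 : ZMod r) n) / n with hC'
  refine ⟨((r.totient:ℝ))⁻¹, |C| + |C'| + 1, ?_, by positivity, fun δ h0 h1 => ?_⟩
  · have := Nat.totient_pos.mpr hr.pos
    positivity
  · have h2 := hC (x := 1 + δ) ⟨by linarith, by linarith⟩
    rw [add_sub_cancel_left] at h2
    have h3 : ∑' n : ℕ, ArithmeticFunction.vonMangoldt.residueClass (1 : ZMod r) n / (n:ℝ)^(1+δ) ≤ Ps r δ + C' := by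
      unfold Ps
      rw [hC', ← (Ps_summable r δ h0).tsum_add hs]
      have key : ∀ n : ℕ, ArithmeticFunction.vonMangoldt.residueClass (1 : ZMod r) n / (n:ℝ)^(1+δ) ≤
          pp r n / (n:ℝ)^(1+δ) + (if n.Prime then 0 else ArithmeticFunction.vonMangoldt.residueClass (1 : ZMod r) n) / n := by
        intro n
        have hnn := ArithmeticFunction.vonMangoldt.residueClass_nonneg (1 : ZMod r) n
        by_cases hp : n.Prime
        · simp only [hp, if_true, zero_div, add_zero]
          gcongr
          by_cases hn : (n : ZMod r) = 1
          · have hd : r ∣ n - 1 := by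
              rw [← ZMod.natCast_eq_zero_iff, Nat.cast_sub hp.one_lt.le, hn]; simp
            have : pp r n = Λ n := by
              simp [pp, hp, hd, ArithmeticFunction.vonMangoldt_apply_prime hp]
            rw [this]
            exact ArithmeticFunction.vonMangoldt.residueClass_le _ n
          · have : ArithmeticFunction.vonMangoldt.residueClass (1 : ZMod r) n = 0 := by
              simp [ArithmeticFunction.vonMangoldt.residueClass, hn]
            rw [this]; exact pp_nonneg r n
        · simp only [hp, if_false]
          have h4 : 0 ≤ pp r n / (n:ℝ)^(1+δ) := div_nonneg (pp_nonneg r n) (by positivity)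
          rcases Nat.eq_zero_or_pos n with rfl | hn
          · simp [pp]
          · have hn' : (1:ℝ) ≤ n := by exact_mod_cast hn
            have h5 : (n:ℝ) ≤ (n:ℝ)^(1+δ) := by
              conv_lhs => rw [← Real.rpow_one (n:ℝ)]
              exact Real.rpow_le_rpow_of_exponent_le hn' (by linarith)
            have : ArithmeticFunction.vonMangoldt.residueClass (1 : ZMod r) n / (n:ℝ)^(1+δ) ≤ ArithmeticFunction.vonMangoldt.residueClass (1 : ZMod r) n / n := by
              gcongr
            linarith
      have hsum := (Ps_summable r δ h0).add hs
      refine Summable.tsum_le_tsum key (Summable.of_nonneg_of_le (fun n => div_nonneg (ArithmeticFunction.vonMangoldt.residueClass_nonneg _ n) (by positivity)) key hsum) hsum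
    have := le_abs_self C
    have := le_abs_self C'
    linarith

lemma Hs_growth (r : ℕ) (hr : r.Prime) : ∃ c δ₀ : ℝ, 0 < c ∧ 0 < δ₀ ∧
    ∀ i : ℕ, ∀ δ : ℝ, 0 < δ → δ * 2 ^ i ≤ δ₀ → (1 + c) ^ i ≤ Hs r δ := by
  obtain ⟨c, C, hc, hC, h⟩ := Ps_lower r hr
  refine ⟨c / 4, min (1 / 2) (c / (4 * C)), by positivity, by positivity, fun i => ?_⟩
  induction i with
  | zero => intro δ h0 _; simpa using Hs_one_le r δ h0
  | succ i ih =>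
    intro δ h0 h1
    have h2 := ih (2 * δ) (by positivity) (by rw [pow_succ] at h1; linarith)
    have h3 := Hs_step r δ h0
    have h4 : δ ≤ min (1 / 2) (c / (4 * C)) := by
      refine le_trans ?_ h1
      have : (1:ℝ) ≤ 2 ^ (i+1) := one_le_pow₀ (by norm_num)
      nlinarith
    have h5 := h (2 * δ) (by positivity) (by linarith [h4.trans (min_le_left _ _)])
    have h6 : C * δ ≤ c / 4 := by
      have := h4.trans (min_le_right _ _)
      rw [le_div_iff₀ (by positivity)] at this
      linarith
    have h7 : c / 4 ≤ δ * Ps r (2 * δ) := by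
      have : δ * (c / (2 * δ) - C) = c / 2 - C * δ := by field_simp
      have h8 := mul_le_mul_of_nonneg_left h5 h0.le
      linarith
    rw [pow_succ]
    refine le_trans ?_ h3
    have h9 := Hs_one_le r (2*δ) (by positivity)
    have : 0 ≤ (1 + c/4)^i := by positivity
    exact mul_le_mul h2 (by linarith) (by positivity) (by linarith)

lemma Hs_growth' (r : ℕ) (hr : r.Prime) : ∃ κ K δ₀ : ℝ, 0 < κ ∧ 0 < K ∧ 0 < δ₀ ∧
    ∀ δ : ℝ, 0 < δ → δ ≤ δ₀ → K * (1 / δ) ^ κ ≤ Hs r δ := by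
  obtain ⟨c, δ₀, hc, hδ₀, h⟩ := Hs_growth r hr
  set κ := Real.logb 2 (1 + c) with hκ
  have hκ0 : 0 < κ := Real.logb_pos (by norm_num) (by linarith)
  have e1 : (2:ℝ) ^ κ = 1 + c := Real.rpow_logb (by norm_num) (by norm_num) (by linarith)
  refine ⟨κ, δ₀ ^ κ / (1 + c), δ₀, hκ0, by positivity, hδ₀, fun δ h0 h1 => ?_⟩
  have hy : 1 ≤ δ₀ / δ := by rwa [le_div_iff₀ h0, one_mul]
  set y := δ₀ / δ with hydef
  have hl : 0 ≤ Real.logb 2 y := Real.logb_nonneg (by norm_num) hy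
  set i := ⌊Real.logb 2 y⌋₊ with hi
  have h2 : (2:ℝ) ^ i ≤ y := by
    rw [← Real.rpow_natCast]
    calc (2:ℝ) ^ (i:ℝ) ≤ 2 ^ (Real.logb 2 y) := Real.rpow_le_rpow_of_exponent_le (by norm_num) (Nat.floor_le hl)
      _ = y := Real.rpow_logb (by norm_num) (by norm_num) (by linarith)
  have h3 : y ≤ (2:ℝ) ^ ((i:ℝ) + 1) := by
    calc y = 2 ^ (Real.logb 2 y) := (Real.rpow_logb (by norm_num) (by norm_num) (by linarith)).symm
      _ ≤ _ := Real.rpow_le_rpow_of_exponent_le (by norm_num) (Nat.lt_floor_add_one _).le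
  have h4 := h i δ h0 (by rw [le_div_iff₀ h0] at h2; linarith)
  refine le_trans ?_ h4
  have h5 : y ^ κ ≤ (1 + c) ^ i * (1 + c) := by
    calc y ^ κ ≤ ((2:ℝ) ^ ((i:ℝ) + 1)) ^ κ := Real.rpow_le_rpow (by linarith) h3 hκ0.le
      _ = ((2:ℝ) ^ κ) ^ ((i:ℝ) + 1) := by rw [← Real.rpow_mul (by norm_num), ← Real.rpow_mul (by norm_num), mul_comm]
      _ = _ := by rw [e1, Real.rpow_add (by linarith), Real.rpow_one, Real.rpow_natCast]
  have h6 : y ^ κ = δ₀ ^ κ * (1 / δ) ^ κ := by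
    rw [← Real.mul_rpow hδ₀.le (by positivity)]; congr 1; rw [hydef]; ring
  rw [h6] at h5
  rw [div_mul_eq_mul_div, div_le_iff₀ (by linarith)]
  exact h5

noncomputable def Er (r : ℕ) (x : ℝ) : ℝ := ∑ m ∈ (Ioc 0 ⌊x⌋₊).filter (fun m => r ∣ m), cc m / m

noncomputable def gg (r m : ℕ) : ℝ := if IsCyclicNum m ∧ r ∣ m then 1 else 0
lemma gg_nonneg (r m : ℕ) : 0 ≤ gg r m := by unfold gg; split_ifs <;> norm_num
lemma gg_le_one (r m : ℕ) : gg r m ≤ 1 := by unfold gg; split_ifs <;> norm_num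

lemma gg_hh (r : ℕ) (hr : r.Prime) (a : ℕ) : ∑ d ∈ a.divisorsAntidiagonal, gg r d.1 * hh r d.2 ≤ 1 := by
  classical
  have h1 : ∀ d ∈ a.divisorsAntidiagonal, gg r d.1 * hh r d.2 =
      if (IsCyclicNum d.1 ∧ r ∣ d.1) ∧ AllOne r d.2 then (1:ℝ) else 0 := by
    intro d _
    unfold gg hh
    by_cases c1 : IsCyclicNum d.1 ∧ r ∣ d.1 <;> by_cases c2 : AllOne r d.2 <;> simp [c1, c2]
  rw [Finset.sum_congr rfl h1, ← Finset.sum_filter, Finset.sum_const, nsmul_eq_mul, mul_one]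
  norm_cast
  rw [Finset.card_le_one]
  have cop : ∀ d e, IsCyclicNum d → r ∣ d → AllOne r e → Nat.Coprime d e := by
    intro d e hd hrd he
    refine Nat.Coprime.symm (Nat.coprime_of_dvd fun p hp hpe hpd => ?_)
    exact ((cyc_iff hd.1).mp hd).2 r p hr hp hrd hpd (he.2 p hp hpe)
  have dv : ∀ d e d' e' : ℕ, d * e = d' * e' → IsCyclicNum d → r ∣ d → AllOne r e' → d ∣ d' := by
    intro d e d' e' h hd hrd he
    exact (cop d e' hd hrd he).dvd_of_dvd_mul_right (h ▸ dvd_mul_right d e)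
  rintro ⟨d, e⟩ h ⟨d', e'⟩ h'
  simp only [Finset.mem_filter, Nat.mem_divisorsAntidiagonal] at h h'
  obtain ⟨⟨h2, h3⟩, ⟨h4, h5⟩, h6⟩ := h
  obtain ⟨⟨h2', h3'⟩, ⟨h4', h5'⟩, h6'⟩ := h'
  have hd : d = d' := Nat.dvd_antisymm (dv d e d' e' (h2.trans h2'.symm) h4 h5 h6')
    (dv d' e' d e (h2'.trans h2.symm) h4' h5' h6)
  subst hd
  have he : e = e' := Nat.eq_of_mul_eq_mul_left h4.1 (h2.trans h2'.symm)
  rw [he]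

lemma Er_le (r : ℕ) (hr : r.Prime) (x : ℝ) (hx : 3 ≤ x) :
    Er r x * Hs r (1 / log x) ≤ exp 1 * (1 + log x) := by
  have hx0 : 0 < x := by linarith
  have hl : 0 < log x := Real.log_pos (by linarith)
  set δ := 1 / log x with hδ
  have hδ0 : 0 < δ := by positivity
  have sg : Summable fun m : ℕ => gg r m / (m:ℝ)^(1+δ) := by
    refine Summable.of_nonneg_of_le (fun n => div_nonneg (gg_nonneg r n) (by positivity)) (fun n => ?_) (zeta_summable δ hδ0)
    gcongr
    exact gg_le_one r n
  have h1 : (∑' m : ℕ, gg r m / (m:ℝ)^(1+δ)) * Hs r δ ≤ 1 + log x := by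
    refine le_trans ?_ ((zeta_le δ hδ0).trans (by rw [hδ, one_div_one_div]))
    refine conv_le _ _ _ (fun n => div_nonneg (gg_nonneg r n) (by positivity))
      (fun n => div_nonneg (hh_nonneg r n) (by positivity)) (fun n => by positivity) ?_ sg (Hs_summable r δ hδ0)
      (zeta_summable δ hδ0) (by simp [gg, IsCyclicNum]) (by simp [hh_zero])
    intro a ha
    rw [antidiag_rpow]
    gcongr
    exact gg_hh r hr a
  have h2 : Er r x ≤ exp 1 * ∑' m : ℕ, gg r m / (m:ℝ)^(1+δ) := by
    refine le_trans ?_ (mul_le_mul_of_nonneg_left (sg.sum_le_tsum (Ioc 0 ⌊x⌋₊) fun n _ => div_nonneg (gg_nonneg r n) (by positivity)) (Real.exp_pos 1).le)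
    unfold Er
    rw [Finset.sum_filter, Finset.mul_sum]
    refine Finset.sum_le_sum fun m hm => ?_
    have hm0 : 0 < m := (Finset.mem_Ioc.mp hm).1
    have hm' : (0:ℝ) < m := by exact_mod_cast hm0
    have h3 := (log_div_nonneg hm).2
    rw [Real.log_div (by positivity) (by positivity)] at h3
    have h4 : (m:ℝ)^δ ≤ exp 1 := by
      rw [Real.rpow_def_of_pos hm']
      apply Real.exp_le_exp.mpr
      rw [hδ, mul_one_div, div_le_one hl]; linarith
    by_cases c1 : r ∣ m <;> by_cases c2 : IsCyclicNum m <;> simp only [gg, cc, c1, c2, if_true, if_false, true_and, and_false, false_and, and_true, zero_div, mul_zero, le_refl]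
    rw [Real.rpow_add hm', Real.rpow_one, ← div_div, mul_div_assoc', le_div_iff₀ (by positivity)]
    rw [mul_comm]
    gcongr
  have h3 := Hs_one_le r δ hδ0
  calc _ ≤ (exp 1 * ∑' m : ℕ, gg r m / (m:ℝ)^(1+δ)) * Hs r δ := by gcongr
    _ = exp 1 * ((∑' m : ℕ, gg r m / (m:ℝ)^(1+δ)) * Hs r δ) := by ring
    _ ≤ _ := by gcongr

lemma Er_small (r : ℕ) (hr : r.Prime) (ε : ℝ) (hε : 0 < ε) : ∀ᶠ x : ℝ in atTop, Er r x ≤ ε * Dd x := by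
  obtain ⟨κ, K, δ₀, hκ, hK, hδ₀, h⟩ := Hs_growth' r hr
  have h1 := Dd_lower (κ/2) (by positivity)
  have h2 : ∀ᶠ t : ℝ in atTop, exp 1 * 2 / K / ε ≤ t ^ (κ/2) :=
    (tendsto_rpow_atTop (by positivity)).eventually_ge_atTop _
  have h3 := Real.tendsto_log_atTop.eventually h2
  have h4 := Real.tendsto_log_atTop.eventually (eventually_ge_atTop (max 1 (1/δ₀)))
  filter_upwards [h1, h3, h4, eventually_ge_atTop 3] with x h1 h3 h4 hx
  have h5 := Er_le r hr x hx
  have l1 : 1 ≤ log x := (le_max_left _ _).trans h4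
  have l2 : 1 / δ₀ ≤ log x := (le_max_right _ _).trans h4
  set t := log x with ht
  have h6 := h (1/t) (by positivity) (by rw [div_le_comm₀ (by positivity) hδ₀]; exact l2)
  rw [one_div_one_div] at h6
  have hE : 0 ≤ Er r x := Finset.sum_nonneg fun m _ => div_nonneg (cc_nonneg m) (by positivity)
  have h7 : Er r x * (K * t ^ κ) ≤ exp 1 * 2 * t := by
    have := mul_le_mul_of_nonneg_left h6 hE
    have he := Real.exp_pos 1
    nlinarith
  have ht0 : 0 < t := by linarith
  have e1 : t ^ κ = t^(κ/2) * t^(κ/2) := by rw [← Real.rpow_add ht0]; congr 1; ring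
  have e2 : t = t ^ (1 - κ/2) * t^(κ/2) := by rw [← Real.rpow_add ht0]; simp
  set a := t^(κ/2) with ha
  have ha0 : 0 < a := by positivity
  have h8 : Er r x * (K * a) ≤ exp 1 * 2 * t^(1-κ/2) := by
    have : (Er r x * (K * a)) * a ≤ (exp 1 * 2 * t^(1-κ/2)) * a := by
      calc _ = Er r x * (K * t^κ) := by rw [e1]; ring
        _ ≤ _ := h7
        _ = exp 1 * 2 * (t^(1-κ/2) * a) := by rw [← e2]
        _ = _ := by ring
    exact le_of_mul_le_mul_right this ha0
  have h9 : exp 1 * 2 ≤ ε * (K * a) := by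
    rw [div_div, div_le_iff₀ (by positivity)] at h3
    nlinarith
  have h10 : Er r x * (K * a) ≤ (ε * Dd x) * (K * a) := by
    calc _ ≤ _ := h8
      _ ≤ (ε * (K * a)) * t^(1-κ/2) := by gcongr
      _ ≤ (ε * (K * a)) * Dd x := by gcongr
      _ = _ := by ring
  exact le_of_mul_le_mul_right h10 (by positivity)

end Part5

section Part6

local notation "Λ" => ArithmeticFunction.vonMangoldt
local notation "ψ" => Chebyshev.psi

lemma sum_swap (F : ℕ → ℕ → ℝ) (x : ℝ) :
    ∑ m ∈ Ioc 0 ⌊x⌋₊, ∑ k ∈ Ioc 0 ⌊x / m⌋₊, F m k = ∑ k ∈ Ioc 0 ⌊x⌋₊, ∑ m ∈ Ioc 0 ⌊x / k⌋₊, F m k := by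
  refine Finset.sum_comm' ?_
  intro a b
  simp only [Finset.mem_Ioc, Nat.floor_div_natCast]
  have key : ∀ a b : ℕ, (0 < a ∧ a ≤ ⌊x⌋₊) ∧ 0 < b ∧ b ≤ ⌊x⌋₊ / a → (0 < b ∧ b ≤ ⌊x⌋₊) ∧ 0 < a ∧ a ≤ ⌊x⌋₊ / b := by
    rintro a b ⟨⟨h1, h2⟩, h3, h4⟩
    rw [Nat.le_div_iff_mul_le h1] at h4
    refine ⟨⟨h3, by nlinarith⟩, h1, ?_⟩
    rw [Nat.le_div_iff_mul_le h3]; linarith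
  constructor
  · intro h; have := key a b h; tauto
  · intro h; have := key b a (by tauto); tauto

/-- pull a prime factor out of `m`. -/
lemma pull_prime (φ : ℕ → ℝ → ℝ) (hφ : ∀ r y, 0 ≤ φ r y) (x : ℝ) :
    ∑ m ∈ Ioc 0 ⌊x⌋₊, cc m * ∑ r ∈ m.primeFactors, φ r (x / m)
      ≤ ∑ m ∈ Ioc 0 ⌊x⌋₊, cc m * ∑ r ∈ (Ioc 0 ⌊x / m⌋₊).filter Nat.Prime, φ r (x / m / r) := by
  have h1 := sum_conv (fun r m => if r.Prime then cc m * φ r (x / m / r) else 0) x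
  rw [sum_swap] at h1
  have e : ∑ m ∈ Ioc 0 ⌊x⌋₊, cc m * ∑ r ∈ (Ioc 0 ⌊x / m⌋₊).filter Nat.Prime, φ r (x / m / r)
     = ∑ k ∈ Ioc 0 ⌊x⌋₊, ∑ m ∈ Ioc 0 ⌊x / k⌋₊, if m.Prime then cc k * φ m (x / k / m) else 0 := by
    refine Finset.sum_congr rfl fun m _ => ?_
    rw [← Finset.sum_filter, Finset.mul_sum]
  rw [e, ← h1]
  refine Finset.sum_le_sum fun m hm => ?_
  have hm0 : 0 < m := (Finset.mem_Ioc.mp hm).1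
  rw [Nat.sum_divisorsAntidiagonal (f := fun r k => if r.Prime then cc k * φ r (x / k / r) else 0), ← Finset.sum_filter, Finset.mul_sum,
    Nat.primeFactors_eq_to_filter_divisors_prime]
  refine Finset.sum_le_sum fun r hr => ?_
  obtain ⟨h2, h3⟩ := Finset.mem_filter.mp hr
  have hd := Nat.dvd_of_mem_divisors h2
  obtain ⟨k, rfl⟩ := hd
  have hr0 := h3.pos
  rw [Nat.mul_div_cancel_left _ hr0]
  have e2 : x / ((r * k : ℕ):ℝ) = x / k / r := by push_cast; rw [div_div, mul_comm]
  rw [e2]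
  exact mul_le_mul_of_nonneg_right (cc_dvd (dvd_mul_left k r)) (hφ _ _)

lemma defect_pointwise (m d : ℕ) : cc m * Λ d * (1 - cc (m * d)) ≤
    cc m * (if d.Prime then 0 else Λ d) + (if d ∣ m then log d else 0)
     + cc m * ∑ r ∈ m.primeFactors, (if d.Prime ∧ d ∣ r - 1 then log (d:ℝ) else 0)
     + cc m * ∑ r ∈ m.primeFactors, pp r d := by
  have hc := cc_nonneg m
  have hl := Real.log_natCast_nonneg d
  have hΛ : 0 ≤ Λ d := ArithmeticFunction.vonMangoldt_nonneg
  have n1 : 0 ≤ cc m * (if d.Prime then 0 else Λ d) := mul_nonneg hc (by split_ifs <;> first | exact le_rfl | exact hΛ)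
  have n2 : 0 ≤ (if d ∣ m then log (d:ℝ) else 0) := by split_ifs <;> first | exact hl | exact le_rfl
  have n3' : ∀ r ∈ m.primeFactors, 0 ≤ (if d.Prime ∧ d ∣ r - 1 then log (d:ℝ) else 0) :=
    fun r _ => by split_ifs <;> first | exact hl | exact le_rfl
  have n4' : ∀ r ∈ m.primeFactors, 0 ≤ pp r d := fun r _ => pp_nonneg r d
  have n3 := mul_nonneg hc (Finset.sum_nonneg n3')
  have n4 := mul_nonneg hc (Finset.sum_nonneg n4')
  have h1 : 1 - cc (m * d) ≤ 1 := by linarith [cc_nonneg (m*d)]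
  have h2 : cc m * Λ d * (1 - cc (m * d)) ≤ cc m * Λ d := mul_le_of_le_one_right (mul_nonneg hc hΛ) h1
  by_cases hm : IsCyclicNum m
  swap
  · have : cc m = 0 := by simp [cc, hm]
    rw [this] at *; simp at *; exact n2
  have hcm : cc m = 1 := by simp [cc, hm]
  by_cases hmd : IsCyclicNum (m * d)
  · have : cc (m * d) = 1 := by simp [cc, hmd]
    rw [this, sub_self, mul_zero]; linarith
  by_cases hd : d.Prime
  swap
  · simp only [hd, if_false] at *; linarith
  have hΛd : Λ d = log d := ArithmeticFunction.vonMangoldt_apply_prime hd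
  have h2' : cc m * Λ d * (1 - cc (m * d)) ≤ log d := h2.trans (by rw [hcm, one_mul, hΛd])
  by_cases hdm : d ∣ m
  · rw [if_pos hdm]; linarith
  have hm0 := hm.1
  rw [cyc_iff (Nat.mul_pos hm0 hd.pos)] at hmd
  have hs : Squarefree (m * d) := by
    rw [Nat.squarefree_mul_iff]
    exact ⟨((hd.coprime_iff_not_dvd).mpr hdm).symm, ((cyc_iff hm0).mp hm).1, hd.squarefree⟩
  have h3' : ∃ p q : ℕ, p.Prime ∧ q.Prime ∧ p ∣ m * d ∧ q ∣ m * d ∧ p ∣ q - 1 := by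
    by_contra hc
    push Not at hc
    exact hmd ⟨hs, hc⟩
  obtain ⟨p, q, hp, hq, hpm, hqm, hpq⟩ := h3'
  rw [hp.dvd_mul, Nat.prime_dvd_prime_iff_eq hp hd] at hpm
  rw [hq.dvd_mul, Nat.prime_dvd_prime_iff_eq hq hd] at hqm
  rcases hpm with hpm | rfl
  · rcases hqm with hqm | rfl
    · exact absurd hpq (((cyc_iff hm0).mp hm).2 p q hp hq hpm hqm)
    · have hmem : p ∈ m.primeFactors := Nat.mem_primeFactors.mpr ⟨hp, hpm, hm0.ne'⟩
      have h4 := Finset.single_le_sum n4' hmem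
      have e : pp p q = log q := by simp [pp, hq, hpq]
      have h5 : log (q:ℝ) ≤ cc m * ∑ r ∈ m.primeFactors, pp r q := by rw [hcm, one_mul, ← e]; exact h4
      linarith
  · rcases hqm with hqm | rfl
    · have hmem : q ∈ m.primeFactors := Nat.mem_primeFactors.mpr ⟨hq, hqm, hm0.ne'⟩
      have h4 := Finset.single_le_sum n3' hmem
      rw [if_pos ⟨hp, hpq⟩] at h4
      have h5 := h4
      rw [← one_mul (∑ r ∈ m.primeFactors, _), ← hcm] at h5
      linarith
    · exfalso
      have := hq.two_le
      have := Nat.le_of_dvd (by omega) hpq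
      omega

lemma pp_sum (r : ℕ) (y : ℝ) : ∑ d ∈ Ioc 0 ⌊y⌋₊, pp r d = th r ⌊y⌋₊ := by
  unfold th pp
  rw [Finset.sum_filter]

lemma th_nonneg (r N : ℕ) : 0 ≤ th r N := Finset.sum_nonneg fun q _ => Real.log_natCast_nonneg q

lemma th_le' (r : ℕ) (hr : r.Prime) (y : ℝ) (hy : 0 ≤ y) : th r ⌊y⌋₊ ≤ 18 * y * (log r / r) := by
  refine (th_le r hr _).trans ?_
  have : 0 ≤ log (r:ℝ) / r := div_nonneg (Real.log_natCast_nonneg r) (by positivity)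
  gcongr
  exact Nat.floor_le hy

noncomputable def ph3 (r : ℕ) (y : ℝ) : ℝ := ∑ d ∈ Ioc 0 ⌊y⌋₊, (if d.Prime ∧ d ∣ r - 1 then log (d:ℝ) else 0)
lemma ph3_nonneg (r : ℕ) (y : ℝ) : 0 ≤ ph3 r y :=
  Finset.sum_nonneg fun d _ => by split_ifs <;> first | exact Real.log_natCast_nonneg d | exact le_rfl

lemma Bb_split (x : ℝ) : Bb x ≤ 
    ∑ m ∈ Ioc 0 ⌊x⌋₊, cc m * ∑ d ∈ Ioc 0 ⌊x / m⌋₊, (if d.Prime then 0 else Λ d)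
    + ∑ m ∈ Ioc 0 ⌊x⌋₊, ∑ d ∈ Ioc 0 ⌊x / m⌋₊, (if d ∣ m then log (d:ℝ) else 0)
    + ∑ m ∈ Ioc 0 ⌊x⌋₊, cc m * ∑ r ∈ m.primeFactors, ph3 r (x / m)
    + ∑ m ∈ Ioc 0 ⌊x⌋₊, cc m * ∑ r ∈ m.primeFactors, th r ⌊x / m⌋₊ := by
  unfold Bb
  simp only [bb_eq]
  rw [sum_conv (fun m d => cc m * Λ d * (1 - cc (m * d)))]
  refine (Finset.sum_le_sum fun m _ => Finset.sum_le_sum fun d _ => defect_pointwise m d).trans (le_of_eq ?_)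
  simp only [Finset.sum_add_distrib, ← Finset.mul_sum]
  congr 1
  · congr 1
    refine Finset.sum_congr rfl fun m _ => ?_
    rw [Finset.sum_comm]; rfl
  · refine Finset.sum_congr rfl fun m _ => ?_
    rw [Finset.sum_comm]
    simp only [pp_sum]

lemma term1 : ∃ C : ℝ, 0 ≤ C ∧ ∀ x : ℝ, 1 ≤ x →
    ∑ m ∈ Ioc 0 ⌊x⌋₊, cc m * ∑ d ∈ Ioc 0 ⌊x / m⌋₊, (if d.Prime then 0 else Λ d) ≤ C * x := by
  obtain ⟨C, hC⟩ := Chebyshev.psi_sub_theta_le_mul_sqrt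
  refine ⟨|C| * 2, by positivity, fun x hx => ?_⟩
  have key : ∀ y : ℝ, ∑ d ∈ Ioc 0 ⌊y⌋₊, (if d.Prime then 0 else Λ d) = ψ y - Chebyshev.theta y := by
    intro y
    unfold Chebyshev.psi Chebyshev.theta
    rw [Finset.sum_filter, ← Finset.sum_sub_distrib]
    refine Finset.sum_congr rfl fun d _ => ?_
    split_ifs with h
    · rw [ArithmeticFunction.vonMangoldt_apply_prime h, sub_self]
    · simp
  have h2 := sqrt_sum x (by linarith)
  calc _ ≤ ∑ m ∈ Ioc 0 ⌊x⌋₊, |C| * √(x / m) := by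
        refine Finset.sum_le_sum fun m hm => ?_
        rw [key]
        have h3 := hC (x / m)
        have h4 : ψ (x/m) - Chebyshev.theta (x/m) ≤ |C| * √(x/m) :=
          h3.trans (mul_le_mul_of_nonneg_right (le_abs_self C) (by positivity))
        have h5 : 0 ≤ |C| * √(x/m) := by positivity
        have := cc_nonneg m
        have := cc_le_one m
        nlinarith
    _ = |C| * ∑ m ∈ Ioc 0 ⌊x⌋₊, √(x / m) := by rw [Finset.mul_sum]
    _ ≤ |C| * (2 * x) := by gcongr
    _ = _ := by ring

lemma count_mult (d : ℕ) (hd : 0 < d) (y : ℝ) (hy : 0 ≤ y) : (((Ioc 0 ⌊y⌋₊).filter (fun m => d ∣ m)).card : ℝ) ≤ y / d := by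
  rw [Nat.Ioc_filter_dvd_card_eq_div]
  refine Nat.cast_div_le.trans ?_
  gcongr
  exact Nat.floor_le hy

lemma sum_log_sq_all (N : ℕ) : ∑ n ∈ Ioc 0 N, log (n:ℝ) / (n:ℝ)^2 ≤ 4 := by
  rcases Nat.eq_zero_or_pos N with rfl | hN
  · simp
  · rw [← Finset.sum_Ioc_consecutive _ (Nat.zero_le 1) hN]
    have := tail_log_sq 1 N le_rfl
    simp at this ⊢
    linarith

lemma term2 (x : ℝ) (hx : 1 ≤ x) :
    ∑ m ∈ Ioc 0 ⌊x⌋₊, ∑ d ∈ Ioc 0 ⌊x / m⌋₊, (if d ∣ m then log (d:ℝ) else 0) ≤ 4 * x := by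
  rw [sum_swap]
  calc _ ≤ ∑ d ∈ Ioc 0 ⌊x⌋₊, x * (log (d:ℝ) / (d:ℝ)^2) := by
        refine Finset.sum_le_sum fun d hd => ?_
        have hd0 : 0 < d := (Finset.mem_Ioc.mp hd).1
        rw [← Finset.sum_filter, Finset.sum_const, nsmul_eq_mul]
        have := count_mult d hd0 (x/d) (by positivity)
        calc _ ≤ x / d / d * log d := mul_le_mul_of_nonneg_right this (Real.log_natCast_nonneg d)
          _ = _ := by field_simp
    _ ≤ _ := by
        rw [← Finset.mul_sum]
        have := sum_log_sq_all ⌊x⌋₊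
        nlinarith

end Part6

section Part7

local notation "Λ" => ArithmeticFunction.vonMangoldt
local notation "ψ" => Chebyshev.psi

lemma prime_count (A : ℕ) (hA : 2 ≤ A) (z : ℝ) (hz : 0 ≤ z) :
    (((Ioc 0 ⌊z⌋₊).filter Nat.Prime).card : ℝ) ≤ A + 6 * z / log A := by
  have hlA : 0 < log (A:ℝ) := Real.log_pos (by exact_mod_cast hA)
  have h1 : ∑ r ∈ (Ioc 0 ⌊z⌋₊).filter Nat.Prime, (1:ℝ) ≤
      ∑ r ∈ Ioc 0 ⌊z⌋₊, (Λ r / log A) + ∑ r ∈ Ioc 0 A, (1:ℝ) := by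
    have : ∑ r ∈ (Ioc 0 ⌊z⌋₊).filter Nat.Prime, (1:ℝ) ≤
       ∑ r ∈ (Ioc 0 ⌊z⌋₊).filter Nat.Prime, (Λ r / log A) + ∑ r ∈ (Ioc 0 ⌊z⌋₊).filter Nat.Prime, (if r ≤ A then (1:ℝ) else 0) := by
      rw [← Finset.sum_add_distrib]
      refine Finset.sum_le_sum fun r hr => ?_
      have hp := (Finset.mem_filter.mp hr).2
      rw [ArithmeticFunction.vonMangoldt_apply_prime hp]
      have h0 : 0 ≤ log (r:ℝ) / log A := div_nonneg (Real.log_natCast_nonneg r) hlA.le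
      split_ifs with h
      · linarith
      · rw [add_zero, le_div_iff₀ hlA, one_mul]
        exact Real.log_le_log (by positivity) (by exact_mod_cast (not_le.mp h).le)
    refine this.trans (add_le_add ?_ ?_)
    · exact Finset.sum_le_sum_of_subset_of_nonneg (Finset.filter_subset _ _) fun i _ _ =>
        div_nonneg ArithmeticFunction.vonMangoldt_nonneg hlA.le
    · rw [← Finset.sum_filter]
      refine Finset.sum_le_sum_of_subset_of_nonneg ?_ fun i _ _ => zero_le_one
      intro r hr
      simp only [Finset.mem_filter, Finset.mem_Ioc] at hr ⊢
      exact ⟨hr.1.1.1, hr.2⟩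
  have h2 := psi_le6 hz
  unfold Chebyshev.psi at h2
  rw [← Finset.sum_div] at h1
  simp only [Finset.sum_const, Nat.card_Ioc, nsmul_eq_mul, mul_one, Nat.sub_zero] at h1
  have h3 : (∑ i ∈ Ioc 0 ⌊z⌋₊, Λ i) / log A ≤ 6 * z / log A := by gcongr
  linarith

lemma G3 (ε : ℝ) (hε : 0 < ε) : ∃ C : ℝ, 0 ≤ C ∧ ∀ z : ℝ, 0 ≤ z →
    ∑ r ∈ (Ioc 0 ⌊z⌋₊).filter Nat.Prime, ph3 r (z / r) ≤ ε * z + C := by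
  obtain ⟨Q, hQ⟩ := exists_nat_gt ((8 / ε)^2)
  have hQ1 : 1 ≤ Q := by
    have : (0:ℝ) < Q := lt_of_le_of_lt (by positivity) hQ
    exact_mod_cast this
  have hQ2 : 4 / √Q ≤ ε / 2 := by
    have h1 : 8 / ε ≤ √Q := Real.le_sqrt_of_sq_le hQ.le
    have h0 : 0 < 8 / ε := by positivity
    rw [div_le_iff₀ (by linarith)]
    rw [div_le_iff₀ hε] at h1; linarith
  have hlQ : 0 ≤ log (Q:ℝ) := Real.log_natCast_nonneg Q
  obtain ⟨A, hA2, hA⟩ : ∃ A : ℕ, 2 ≤ A ∧ Q * log Q * 6 / log A ≤ ε / 2 := by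
    have h1 : Tendsto (fun A : ℕ => log (A:ℝ)) atTop atTop := Real.tendsto_log_atTop.comp tendsto_natCast_atTop_atTop
    obtain ⟨A, hA1, hA2⟩ := ((h1.eventually_ge_atTop (Q * log Q * 6 * 2 / ε + 1)).and (eventually_ge_atTop 2)).exists
    refine ⟨A, hA2, ?_⟩
    have h3 : 0 ≤ Q * log Q * 6 * 2 / ε := by positivity
    rw [div_le_iff₀ (by linarith)]
    have h4 : Q * log Q * 6 * 2 / ε ≤ log A := by linarith
    rw [div_le_iff₀ hε] at h4; linarith
  refine ⟨Q * log Q * A, by positivity, fun z hz => ?_⟩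
  set F : ℕ → ℕ → ℝ := fun r d => if r.Prime ∧ d.Prime ∧ d ∣ r - 1 then log (d:ℝ) else 0 with hF
  have hF0 : ∀ r d, 0 ≤ F r d := fun r d => by
    simp only [hF]; split_ifs <;> first | exact Real.log_natCast_nonneg d | exact le_rfl
  have e1 : ∑ r ∈ (Ioc 0 ⌊z⌋₊).filter Nat.Prime, ph3 r (z / r) = ∑ r ∈ Ioc 0 ⌊z⌋₊, ∑ d ∈ Ioc 0 ⌊z / r⌋₊, F r d := by
    rw [Finset.sum_filter]
    refine Finset.sum_congr rfl fun r _ => ?_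
    split_ifs with h
    · simp [ph3, hF, h]
    · simp [hF, h]
  rw [e1, sum_swap]
  have big : ∀ d ∈ Ioc 0 ⌊z⌋₊, ∑ m ∈ Ioc 0 ⌊z / d⌋₊, F m d ≤ z * (log d / (d:ℝ)^2) := by
    intro d hd
    have hd0 : 0 < d := (Finset.mem_Ioc.mp hd).1
    have h1 : ∑ m ∈ Ioc 0 ⌊z / d⌋₊, F m d ≤ ∑ m ∈ (Ioc 0 ⌊z / d⌋₊).filter (fun m => d ∣ m), log (d:ℝ) := by
      have : ∑ m ∈ Ioc 0 ⌊z / d⌋₊, F m d = ∑ m ∈ (Ioc 0 ⌊z / d⌋₊).filter (fun r => r.Prime ∧ d.Prime ∧ d ∣ r - 1), log (d:ℝ) := by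
        rw [Finset.sum_filter]
      rw [this, Finset.sum_const, Finset.sum_const]
      refine nsmul_le_nsmul_left (Real.log_natCast_nonneg d) ?_
      refine Finset.card_le_card_of_injOn (fun r => r - 1) ?_ ?_
      · intro r hr
        simp only [Finset.coe_filter, Set.mem_ofPred_eq, Finset.mem_Ioc] at hr ⊢
        have := hr.2.1.two_le
        exact ⟨⟨by omega, by omega⟩, hr.2.2.2⟩
      · intro a ha b hb hab
        simp only [Finset.coe_filter, Set.mem_ofPred_eq, Finset.mem_Ioc] at ha hb hab
        omega
    refine h1.trans ?_
    rw [Finset.sum_const, nsmul_eq_mul]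
    have := count_mult d hd0 (z/d) (by positivity)
    calc _ ≤ z / d / d * log d := mul_le_mul_of_nonneg_right this (Real.log_natCast_nonneg d)
      _ = _ := by field_simp
  have small : ∀ d ∈ Ioc 0 Q, ∑ m ∈ Ioc 0 ⌊z / d⌋₊, F m d ≤ log Q * (A + 6 * z / log A) := by
    intro d hd
    obtain ⟨hd0, hdQ⟩ := Finset.mem_Ioc.mp hd
    have hlog : log (d:ℝ) ≤ log Q := Real.log_le_log (by positivity) (by exact_mod_cast hdQ)
    calc ∑ m ∈ Ioc 0 ⌊z / d⌋₊, F m d ≤ ∑ m ∈ Ioc 0 ⌊z⌋₊, F m d := by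
          refine Finset.sum_le_sum_of_subset_of_nonneg (Finset.Ioc_subset_Ioc_right ?_) fun i _ _ => hF0 _ _
          refine Nat.floor_mono (div_le_self hz (by exact_mod_cast hd0))
      _ ≤ ∑ m ∈ Ioc 0 ⌊z⌋₊, (if m.Prime then log (Q:ℝ) else 0) := by
          refine Finset.sum_le_sum fun m _ => ?_
          simp only [hF]
          split_ifs with h1 h2 h2
          · exact hlog
          · exact absurd h1.1 h2
          · exact hlQ
          · exact le_rfl
      _ = log Q * ((Ioc 0 ⌊z⌋₊).filter Nat.Prime).card := by
          rw [← Finset.sum_filter, Finset.sum_const, nsmul_eq_mul, mul_comm]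
      _ ≤ _ := by gcongr; exact prime_count A hA2 z hz
  set N := ⌊z⌋₊
  have hS0 : ∀ d : ℕ, 0 ≤ ∑ m ∈ Ioc 0 ⌊z / (d:ℝ)⌋₊, F m d := fun d => Finset.sum_nonneg fun i _ => hF0 _ _
  have hsub : Ioc 0 N ⊆ Ioc 0 Q ∪ Ioc Q N := by
    intro d hd
    simp only [Finset.mem_union, Finset.mem_Ioc] at hd ⊢
    omega
  have hT : ∑ d ∈ Ioc Q N, ∑ m ∈ Ioc 0 ⌊z / (d:ℝ)⌋₊, F m d ≤ z * (4 / √Q) := by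
    refine (Finset.sum_le_sum fun d hd => big d ?_).trans ?_
    · simp only [Finset.mem_Ioc] at hd ⊢; omega
    · rw [← Finset.mul_sum]; exact mul_le_mul_of_nonneg_left (tail_log_sq Q N hQ1) hz
  have hU : ∑ d ∈ Ioc 0 Q, ∑ m ∈ Ioc 0 ⌊z / (d:ℝ)⌋₊, F m d ≤ Q * (log Q * (A + 6 * z / log A)) := by
    refine (Finset.sum_le_sum small).trans ?_
    rw [Finset.sum_const, nsmul_eq_mul, Nat.card_Ioc, Nat.sub_zero]
  have h1 := Finset.sum_le_sum_of_subset_of_nonneg hsub (fun d _ _ => hS0 d)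
  have h2 := Finset.sum_union_le (s := Ioc 0 Q) (t := Ioc Q N) hS0
  have h3 : z * (4 / √Q) ≤ z * (ε / 2) := by gcongr
  have h4 : Q * (log Q * (A + 6 * z / log A)) = Q * log Q * A + (Q * log Q * 6 / log A) * z := by ring
  have h5 : (Q * log Q * 6 / log A) * z ≤ ε / 2 * z := by gcongr
  linarith

lemma term3 (ε : ℝ) (hε : 0 < ε) : ∃ C : ℝ, 0 ≤ C ∧ ∀ x : ℝ, 1 ≤ x →
    ∑ m ∈ Ioc 0 ⌊x⌋₊, cc m * ∑ r ∈ m.primeFactors, ph3 r (x / m) ≤ ε * x * Dd x + C * x := by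
  obtain ⟨C, hC, h⟩ := G3 ε hε
  refine ⟨C, hC, fun x hx => (pull_prime _ ph3_nonneg x).trans ?_⟩
  calc _ ≤ ∑ m ∈ Ioc 0 ⌊x⌋₊, (ε * x * (cc m / m) + C) := by
        refine Finset.sum_le_sum fun m hm => ?_
        have h1 := mul_le_mul_of_nonneg_left (h (x / m) (by positivity)) (cc_nonneg m)
        refine h1.trans ?_
        have h2 : cc m * C ≤ C := mul_le_of_le_one_left hC (cc_le_one m)
        calc cc m * (ε * (x/m) + C) = ε * x * (cc m / m) + cc m * C := by ring
          _ ≤ _ := by linarith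
    _ = ε * x * Dd x + ⌊x⌋₊ * C := by
        rw [Finset.sum_add_distrib, ← Finset.mul_sum, Finset.sum_const, nsmul_eq_mul, Nat.card_Ioc, Nat.sub_zero]; rfl
    _ ≤ _ := by
        have := Nat.floor_le (show 0 ≤ x by linarith)
        nlinarith

lemma Dd_nonneg (x : ℝ) : 0 ≤ Dd x := Finset.sum_nonneg fun m _ => div_nonneg (cc_nonneg m) (by positivity)

lemma term4 (ε : ℝ) (hε : 0 < ε) : ∀ᶠ x : ℝ in atTop,
    ∑ m ∈ Ioc 0 ⌊x⌋₊, cc m * ∑ r ∈ m.primeFactors, th r ⌊x / m⌋₊ ≤ ε * x * Dd x := by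
  obtain ⟨R, hR⟩ := exists_nat_gt ((144 / ε)^2)
  have hR1 : 1 ≤ R := by
    have : (0:ℝ) < R := lt_of_le_of_lt (by positivity) hR
    exact_mod_cast this
  have hR2 : 18 * (4 / √R) ≤ ε / 2 := by
    have h1 : 144 / ε ≤ √R := Real.le_sqrt_of_sq_le hR.le
    have h0 : 0 < 144 / ε := by positivity
    rw [← mul_div_assoc, div_le_iff₀ (by linarith)]
    rw [div_le_iff₀ hε] at h1; linarith
  have hR0 : (0:ℝ) < R := by exact_mod_cast hR1
  have hE : ∀ᶠ x : ℝ in atTop, ∀ r ∈ (Ioc 0 R).filter Nat.Prime, Er r x ≤ (ε / (36 * R)) * Dd x := by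
    rw [Filter.eventually_all_finset]
    intro r hr
    exact Er_small r (Finset.mem_filter.mp hr).2 _ (by positivity)
  filter_upwards [hE, eventually_ge_atTop 1] with x hEx hx
  have hx0 : 0 ≤ x := by linarith
  set φ : ℕ → ℝ → ℝ := fun r y => if R < r then th r ⌊y⌋₊ else 0 with hφ
  have hφ0 : ∀ r y, 0 ≤ φ r y := fun r y => by
    simp only [hφ]; split_ifs <;> first | exact th_nonneg _ _ | exact le_rfl
  have hsplit : ∑ m ∈ Ioc 0 ⌊x⌋₊, cc m * ∑ r ∈ m.primeFactors, th r ⌊x / m⌋₊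
     = ∑ m ∈ Ioc 0 ⌊x⌋₊, cc m * ∑ r ∈ m.primeFactors, φ r (x / m)
      + ∑ m ∈ Ioc 0 ⌊x⌋₊, cc m * ∑ r ∈ m.primeFactors, (if R < r then 0 else th r ⌊x / m⌋₊) := by
    rw [← Finset.sum_add_distrib]
    refine Finset.sum_congr rfl fun m _ => ?_
    rw [← mul_add, ← Finset.sum_add_distrib]
    congr 1
    refine Finset.sum_congr rfl fun r _ => ?_
    simp only [hφ]; split_ifs <;> ring
  have hbig : ∑ m ∈ Ioc 0 ⌊x⌋₊, cc m * ∑ r ∈ m.primeFactors, φ r (x / m) ≤ ε / 2 * x * Dd x := by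
    refine (pull_prime φ hφ0 x).trans ?_
    unfold Dd
    rw [Finset.mul_sum]
    refine Finset.sum_le_sum fun m hm => ?_
    have hy : 0 ≤ x / m := by positivity
    have : ∑ r ∈ (Ioc 0 ⌊x / m⌋₊).filter Nat.Prime, φ r (x / m / r) ≤ ε / 2 * (x / m) := by
      calc _ ≤ ∑ r ∈ Ioc R ⌊x / m⌋₊, 18 * (x / m) * (log r / (r:ℝ)^2) := by
            have : ∑ r ∈ (Ioc 0 ⌊x / m⌋₊).filter Nat.Prime, φ r (x / m / r)
              = ∑ r ∈ ((Ioc 0 ⌊x / m⌋₊).filter Nat.Prime).filter (fun r => R < r), th r ⌊x / m / r⌋₊ := by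
              rw [Finset.sum_filter (p := fun r => R < r)]
            rw [this]
            refine (Finset.sum_le_sum (g := fun r : ℕ => 18 * (x / m) * (log r / (r:ℝ)^2)) fun r hr => ?_).trans ?_
            · have hp := (Finset.mem_filter.mp (Finset.mem_filter.mp hr).1).2
              refine (th_le' r hp _ (by positivity)).trans (le_of_eq ?_)
              have := hp.pos
              field_simp
            · refine Finset.sum_le_sum_of_subset_of_nonneg ?_ fun i _ _ => ?_
              · intro r hr
                simp only [Finset.mem_filter, Finset.mem_Ioc] at hr ⊢
                exact ⟨hr.2, hr.1.1.2⟩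
              · have := Real.log_natCast_nonneg i
                positivity
        _ ≤ 18 * (x / m) * (4 / √R) := by
            rw [← Finset.mul_sum]
            exact mul_le_mul_of_nonneg_left (tail_log_sq R _ hR1) (by positivity)
        _ = 18 * (4 / √R) * (x / m) := by ring
        _ ≤ _ := by gcongr
    refine (mul_le_mul_of_nonneg_left this (cc_nonneg m)).trans (le_of_eq ?_)
    ring
  have hsmall : ∑ m ∈ Ioc 0 ⌊x⌋₊, cc m * ∑ r ∈ m.primeFactors, (if R < r then 0 else th r ⌊x / m⌋₊) ≤ ε / 2 * x * Dd x := by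
    calc _ ≤ ∑ m ∈ Ioc 0 ⌊x⌋₊, ∑ r ∈ (Ioc 0 R).filter Nat.Prime, (if r ∣ m then 18 * x * (cc m / m) else 0) := by
          refine Finset.sum_le_sum fun m hm => ?_
          have hm0 : 0 < m := (Finset.mem_Ioc.mp hm).1
          rw [← Finset.sum_filter, Finset.mul_sum]
          have e : ∑ r ∈ m.primeFactors, cc m * (if R < r then 0 else th r ⌊x / m⌋₊)
             = ∑ r ∈ m.primeFactors.filter (fun r => ¬ R < r), cc m * th r ⌊x / m⌋₊ := by
            rw [Finset.sum_filter]
            refine Finset.sum_congr rfl fun r _ => ?_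
            split_ifs <;> simp
          rw [e]
          refine (Finset.sum_le_sum (g := fun r : ℕ => 18 * x * (cc m / m)) fun r hr => ?_).trans ?_
          · have hp := Nat.prime_of_mem_primeFactors (Finset.mem_filter.mp hr).1
            have h1 := th_le' r hp (x / m) (by positivity)
            have h2 : log (r:ℝ) / r ≤ 1 := by
              have : (0:ℝ) < r := by exact_mod_cast hp.pos
              rw [div_le_one this]
              linarith [Real.log_le_sub_one_of_pos this]
            have h3 : th r ⌊x / m⌋₊ ≤ 18 * (x / m) := h1.trans (mul_le_of_le_one_right (by positivity) h2)
            refine (mul_le_mul_of_nonneg_left h3 (cc_nonneg m)).trans (le_of_eq ?_)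
            ring
          · refine Finset.sum_le_sum_of_subset_of_nonneg ?_ fun i _ _ => ?_
            · intro r hr
              simp only [Finset.mem_filter, Finset.mem_Ioc, Nat.mem_primeFactors] at hr ⊢
              exact ⟨⟨⟨hr.1.1.pos, by omega⟩, hr.1.1⟩, hr.1.2.1⟩
            · have := cc_nonneg m
              positivity
      _ = ∑ r ∈ (Ioc 0 R).filter Nat.Prime, 18 * x * Er r x := by
          rw [Finset.sum_comm]
          refine Finset.sum_congr rfl fun r _ => ?_
          rw [← Finset.sum_filter, ← Finset.mul_sum]; rfl
      _ ≤ ∑ r ∈ (Ioc 0 R).filter Nat.Prime, 18 * x * ((ε / (36 * R)) * Dd x) := by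
          refine Finset.sum_le_sum fun r hr => ?_
          exact mul_le_mul_of_nonneg_left (hEx r hr) (by positivity)
      _ ≤ R * (18 * x * ((ε / (36 * R)) * Dd x)) := by
          rw [Finset.sum_const, nsmul_eq_mul]
          have hD := Dd_nonneg x
          gcongr
          refine (Finset.card_filter_le _ _).trans ?_
          simp
      _ = _ := by field_simp; ring
  rw [hsplit]
  linarith

end Part7

section Part8

local notation "Λ" => ArithmeticFunction.vonMangoldt
local notation "ψ" => Chebyshev.psi

lemma Dd_tendsto : Tendsto Dd atTop atTop := by
  have h := Dd_lower (1/2) (by norm_num)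
  have h1 : Tendsto (fun x : ℝ => log x ^ (1 - (1/2:ℝ))) atTop atTop :=
    (tendsto_rpow_atTop (by norm_num)).comp Real.tendsto_log_atTop
  exact tendsto_atTop_mono' _ h h1

lemma Dd_mono {x y : ℝ} (h : x ≤ y) : Dd x ≤ Dd y :=
  Finset.sum_le_sum_of_subset_of_nonneg (Finset.Ioc_subset_Ioc_right (Nat.floor_mono h))
    fun m _ _ => div_nonneg (cc_nonneg m) (by positivity)

lemma Bb_mono {x y : ℝ} (h : x ≤ y) : Bb x ≤ Bb y :=
  Finset.sum_le_sum_of_subset_of_nonneg (Finset.Ioc_subset_Ioc_right (Nat.floor_mono h))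
    fun m _ _ => bb_nonneg m

lemma Bb_nonneg (x : ℝ) : 0 ≤ Bb x := Finset.sum_nonneg fun m _ => bb_nonneg m

lemma Bb_small (ε : ℝ) (hε : 0 < ε) : ∀ᶠ x : ℝ in atTop, Bb x ≤ ε * x * Dd x := by
  obtain ⟨C1, h1, H1⟩ := term1
  obtain ⟨C3, h3, H3⟩ := term3 (ε / 3) (by positivity)
  filter_upwards [term4 (ε / 3) (by positivity), eventually_ge_atTop 1,
    Dd_tendsto.eventually_ge_atTop ((C1 + 4 + C3) * 3 / ε)] with x H4 hx hD
  have := Bb_split x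
  have a1 := H1 x hx
  have a2 := term2 x hx
  have a3 := H3 x hx
  rw [div_le_iff₀ hε] at hD
  have : (C1 + 4 + C3) * x ≤ ε / 3 * x * Dd x := by nlinarith
  linarith

lemma bb_div_small (ε : ℝ) (hε : 0 < ε) : ∀ᶠ x : ℝ in atTop,
    ∑ n ∈ Ioc 0 ⌊x⌋₊, bb n / n ≤ ε * (Dd x * log x) := by
  obtain ⟨X0, hX0⟩ := eventually_atTop.mp (Bb_small (ε / 3) (by positivity))
  filter_upwards [eventually_ge_atTop 1, Dd_tendsto.eventually_ge_atTop 1,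
    Real.tendsto_log_atTop.eventually_ge_atTop 3, Real.tendsto_log_atTop.eventually_ge_atTop (Bb X0 * 3 / ε)] with x hx hD hl hl2
  have hx0 : 0 ≤ x := by linarith
  have hB := Bb_nonneg X0
  have h := abel_le bb (fun n => 1 / (n:ℝ)) (ε / 3 * Dd x) (Bb X0) ⌊x⌋₊ (by
    intro n hn
    have e : ∑ i ∈ Ioc 0 n, bb i = Bb (n:ℝ) := by unfold Bb; rw [Nat.floor_natCast]
    rw [e]
    have hnn : (0:ℝ) ≤ n := by positivity
    have hnx : (n:ℝ) ≤ x := (Nat.le_floor_iff hx0).mp hn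
    have h0 : 0 ≤ ε / 3 * Dd x * n := by have := Dd_nonneg x; positivity
    rcases le_total X0 n with h | h
    · have h1 := hX0 n h
      have h2 : ε / 3 * n * Dd n ≤ ε / 3 * n * Dd x := by gcongr; exact Dd_mono hnx
      linarith
    · have := Bb_mono h
      linarith) (by intros; positivity) (by
    intro n h1 _
    have : (0:ℝ) < n := by exact_mod_cast h1
    push_cast
    gcongr
    linarith)
  have hh := (abs_le.mp (harm_real x hx)).2
  have hg := gamma_bd
  have h2x : 2 / x ≤ 2 := by rw [div_le_iff₀ (by linarith)]; linarith
  have hs : ∑ n ∈ Ioc 0 ⌊x⌋₊, (1:ℝ) / n ≤ 2 * log x := by linarith [hg.2]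
  have hif : (if ⌊x⌋₊ = 0 then 0 else Bb X0 * (1 / ((1:ℕ):ℝ))) ≤ Bb X0 := by split_ifs <;> simp [hB]
  have e : ∑ n ∈ Ioc 0 ⌊x⌋₊, bb n / n = ∑ n ∈ Ioc 0 ⌊x⌋₊, bb n * (1 / (n:ℝ)) :=
    Finset.sum_congr rfl fun n _ => by ring
  rw [e]
  have h3 : ε / 3 * Dd x * ∑ n ∈ Ioc 0 ⌊x⌋₊, (1:ℝ) / n ≤ ε / 3 * Dd x * (2 * log x) := by
    gcongr
  rw [div_le_iff₀ hε] at hl2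
  have h4 : Bb X0 ≤ ε / 3 * (Dd x * log x) := by nlinarith
  calc _ ≤ _ := h
    _ ≤ ε / 3 * Dd x * (2 * log x) + Bb X0 := add_le_add h3 hif
    _ ≤ _ := by linarith

lemma Mm_large : ∀ᶠ x : ℝ in atTop, Dd x * log x ≤ 4 * Mm x := by
  filter_upwards [eventually_ge_atTop 1, Real.tendsto_log_atTop.eventually_ge_atTop 22] with x hx hl
  have := Mm_lower hx
  have := Dd_nonneg x
  nlinarith

lemma Cn_bound (ε : ℝ) (hε : 0 < ε) : ∀ᶠ x : ℝ in atTop,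
    |Cn x * log x ^ 2 - 2 * x * Mm x| ≤ ε * (x * Mm x) := by
  set e := ε / 36 with he
  have he0 : 0 < e := by positivity
  filter_upwards [eventually_ge_atTop 1, Mm_large, Bb_small e he0, bb_div_small e he0,
    Dd_tendsto.eventually_ge_atTop (10 / e), Real.tendsto_log_atTop.eventually_ge_atTop (200 / e)] with x hx hM hB hb hD hl
  have h := Cn_asymp_bound hx
  have hx0 : 0 < x := by linarith
  have hD0 := Dd_nonneg x
  have hl0 := Real.log_nonneg hx
  rw [div_le_iff₀ he0] at hD hl
  have a1 : 200 * x * Dd x ≤ e * (x * (Dd x * log x)) := by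
    have := mul_le_mul_of_nonneg_right hl (mul_nonneg hx0.le hD0); linarith
  have a2 : 10 * x * log x ≤ e * (x * (Dd x * log x)) := by
    have := mul_le_mul_of_nonneg_right hD (mul_nonneg hx0.le hl0); linarith
  have a3 : log x * Bb x ≤ e * (x * (Dd x * log x)) := by
    have := mul_le_mul_of_nonneg_left hB hl0; linarith
  have a4 := mul_le_mul_of_nonneg_left hb (show 0 ≤ 6 * x by linarith)
  have a5 := mul_le_mul_of_nonneg_left hM (mul_nonneg he0.le hx0.le)
  have : ε = 36 * e := by rw [he]; ring
  rw [this]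
  linarith

lemma Mm_pos : ∀ᶠ x : ℝ in atTop, 0 < Mm x := by
  filter_upwards [Mm_large, Dd_tendsto.eventually_ge_atTop 1, Real.tendsto_log_atTop.eventually_ge_atTop 1] with x h1 h2 h3
  nlinarith

lemma Cn_equiv : Cn ~[atTop] (fun x => 2 * x * Mm x / log x ^ 2) := by
  rw [IsEquivalent, Asymptotics.isLittleO_iff]
  intro c hc
  filter_upwards [Cn_bound c hc, eventually_ge_atTop 1, Mm_pos, Real.tendsto_log_atTop.eventually_ge_atTop 1] with x h hx hM hl
  have hl2 : 0 < log x ^ 2 := by positivity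
  have e : (Cn - fun x : ℝ => 2 * x * Mm x / log x ^ 2 : ℝ → ℝ) x = (Cn x * log x ^ 2 - 2 * x * Mm x) / log x ^ 2 := by
    simp only [Pi.sub_apply]; field_simp
  rw [e, Real.norm_eq_abs, Real.norm_eq_abs, abs_div, abs_div, abs_of_pos hl2, ← mul_div_assoc]
  gcongr
  refine h.trans ?_
  rw [abs_of_nonneg (by positivity)]
  have : 0 ≤ c * (x * Mm x) := by positivity
  linarith

lemma Mm_diff (l x : ℝ) (hl : 0 < l) (hl1 : l ≤ 1) (hx : 0 < x) :
    Mm (l * x) ≤ Mm x ∧ Mm x ≤ Mm (l * x) + log (1 / l) * Dd x := by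
  have hlx : l * x ≤ x := by nlinarith
  have hN : ⌊l * x⌋₊ ≤ ⌊x⌋₊ := Nat.floor_mono hlx
  have hlog : 0 ≤ log (1 / l) := Real.log_nonneg (by rw [le_div_iff₀ hl]; linarith)
  unfold Mm Dd
  rw [← Finset.sum_Ioc_consecutive _ (Nat.zero_le _) hN, ← Finset.sum_Ioc_consecutive (fun m : ℕ => cc m / m) (Nat.zero_le _) hN]
  have e1 : ∑ m ∈ Ioc 0 ⌊l * x⌋₊, cc m / m * log (x / m) = ∑ m ∈ Ioc 0 ⌊l * x⌋₊, cc m / m * log (l * x / m)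
      + log (1 / l) * ∑ m ∈ Ioc 0 ⌊l * x⌋₊, cc m / m := by
    rw [Finset.mul_sum, ← Finset.sum_add_distrib]
    refine Finset.sum_congr rfl fun m hm => ?_
    have hm0 : (0:ℝ) < m := by exact_mod_cast (Finset.mem_Ioc.mp hm).1
    have : log (x / m) = log (1 / l) + log (l * x / m) := by
      rw [← Real.log_mul (by positivity) (by positivity)]
      congr 1; field_simp
    rw [this]; ring
  have hcm : ∀ m : ℕ, 0 ≤ cc m / (m:ℝ) := fun m => div_nonneg (cc_nonneg m) (by positivity)
  have e2 : ∑ m ∈ Ioc ⌊l * x⌋₊ ⌊x⌋₊, cc m / m * log (x / m) ≤ log (1 / l) * ∑ m ∈ Ioc ⌊l * x⌋₊ ⌊x⌋₊, cc m / m := by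
    rw [Finset.mul_sum]
    refine Finset.sum_le_sum fun m hm => ?_
    obtain ⟨h1, h2⟩ := Finset.mem_Ioc.mp hm
    have hm0 : (0:ℝ) < m := by exact_mod_cast (Nat.zero_le _).trans_lt h1
    have h3 : l * x < m := (Nat.floor_lt (by positivity)).mp h1
    rw [mul_comm]
    refine mul_le_mul_of_nonneg_right (Real.log_le_log (by positivity) ?_) (hcm m)
    rw [div_le_div_iff₀ hm0 hl]; linarith
  have e3 : 0 ≤ ∑ m ∈ Ioc ⌊l * x⌋₊ ⌊x⌋₊, cc m / m * log (x / m) := by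
    refine Finset.sum_nonneg fun m hm => mul_nonneg (hcm m) ?_
    refine (log_div_nonneg ?_).2
    simp only [Finset.mem_Ioc] at hm ⊢
    omega
  have e4 : 0 ≤ log (1 / l) * ∑ m ∈ Ioc 0 ⌊l * x⌋₊, cc m / (m:ℝ) := mul_nonneg hlog (Finset.sum_nonneg fun m _ => hcm m)
  rw [e1]
  constructor <;> linarith

lemma Mm_ratio (l : ℝ) (hl : 0 < l) (hl1 : l ≤ 1) : Tendsto (fun x => Mm (l * x) / Mm x) atTop (nhds 1) := by
  have hlog : 0 ≤ log (1 / l) := Real.log_nonneg (by rw [le_div_iff₀ hl]; linarith)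
  have hlim : Tendsto (fun x : ℝ => 1 - 4 * log (1 / l) / log x) atTop (nhds 1) := by
    have := (tendsto_const_nhds (x := (1:ℝ)) (f := atTop)).sub
      (Real.tendsto_log_atTop.const_div_atTop (4 * log (1 / l)))
    simpa using this
  refine tendsto_of_tendsto_of_tendsto_of_le_of_le' hlim tendsto_const_nhds ?_ ?_
  · filter_upwards [Mm_pos, Mm_large, eventually_gt_atTop 0, Real.tendsto_log_atTop.eventually_ge_atTop 1] with x h1 h2 h3 h4
    have := (Mm_diff l x hl hl1 h3).2
    rw [le_div_iff₀ h1]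
    have h5 : Dd x ≤ 4 * Mm x / log x := by rw [le_div_iff₀ (by linarith)]; exact h2
    have h6 := mul_le_mul_of_nonneg_left h5 hlog
    have h7 : (1 - 4 * log (1 / l) / log x) * Mm x = Mm x - log (1 / l) * (4 * Mm x / log x) := by ring
    rw [h7]; linarith
  · filter_upwards [Mm_pos, eventually_gt_atTop 0] with x h1 h3
    rw [div_le_one h1]
    exact (Mm_diff l x hl hl1 h3).1

lemma log_ratio (l : ℝ) (hl : 0 < l) : Tendsto (fun x => log x / log (l * x)) atTop (nhds 1) := by
  have h1 : Tendsto (fun x : ℝ => 1 / (log l / log x + 1)) atTop (nhds 1) := by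
    have := ((Real.tendsto_log_atTop.const_div_atTop (log l)).add (tendsto_const_nhds (x := (1:ℝ))))
    have := (tendsto_const_nhds (x := (1:ℝ))).div this (by norm_num)
    rw [zero_add, div_one] at this
    exact this
  refine h1.congr' ?_
  filter_upwards [eventually_gt_atTop 0, Real.tendsto_log_atTop.eventually_ge_atTop 1] with x hx hlx
  rw [Real.log_mul hl.ne' hx.ne']
  have : log x ≠ 0 := by linarith
  rw [div_add_one this, one_div_div]

lemma Cn_ratio (l : ℝ) (hl : 0 < l) (hl1 : l ≤ 1) : Tendsto (fun x => Cn (l * x) / Cn x) atTop (nhds l) := by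
  have ht : Tendsto (fun x : ℝ => l * x) atTop atTop := tendsto_id.const_mul_atTop hl
  have h1 := (Cn_equiv.comp_tendsto ht).div Cn_equiv
  refine h1.symm.tendsto_nhds ?_
  have h2 := ((Mm_ratio l hl hl1).mul ((log_ratio l hl).pow 2)).const_mul l
  simp only [one_pow, mul_one] at h2
  refine h2.congr' ?_
  filter_upwards [eventually_gt_atTop 0, Mm_pos, Real.tendsto_log_atTop.eventually_ge_atTop 1,
    (Real.tendsto_log_atTop.comp ht).eventually_ge_atTop 1] with x hx hM hl1 hl2
  have h3 : log x ≠ 0 := by linarith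
  have h4 : log (l * x) ≠ 0 := by simp only [Function.comp] at hl2; linarith
  simp only [Function.comp, Pi.div_apply]
  field_simp

end Part8

lemma Cn_ratio' (l : ℝ) (hl : 0 ≤ l) (hl1 : l ≤ 1) : Tendsto (fun x => Cn (l * x) / Cn x) atTop (nhds l) := by
  rcases hl.eq_or_lt with rfl | h
  · have : ∀ x : ℝ, Cn (0 * x) / Cn x = 0 := fun x => by simp [Cn]
    simp only [this]; exact tendsto_const_nhds
  · exact Cn_ratio l h hl1

lemma pow_diff (k : ℕ) (i : ℝ) (hi : 0 ≤ i) :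
    (k + 1) * i ^ k ≤ (i + 1) ^ (k + 1) - i ^ (k + 1) ∧ (i + 1) ^ (k + 1) - i ^ (k + 1) ≤ (k + 1) * (i + 1) ^ k := by
  induction k with
  | zero => simp
  | succ k ih =>
    obtain ⟨h1, h2⟩ := ih
    have h3 := mul_le_mul_of_nonneg_left h1 hi
    have h4 := mul_le_mul_of_nonneg_left h2 (show 0 ≤ i + 1 by linarith)
    have h5 : i ^ (k + 1) ≤ (i + 1) ^ (k + 1) := by gcongr; linarith
    push_cast
    constructor
    · have e : (i + 1) ^ (k + 1 + 1) - i ^ (k + 1 + 1) = i * ((i + 1) ^ (k + 1) - i ^ (k + 1)) + (i + 1) ^ (k + 1) := by ring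
      have e2 : ((k:ℝ) + 1 + 1) * i ^ (k + 1) = i * ((k + 1) * i ^ k) + i ^ (k + 1) := by ring
      rw [e, e2]; linarith
    · have e : (i + 1) ^ (k + 1 + 1) - i ^ (k + 1 + 1) = (i + 1) * ((i + 1) ^ (k + 1) - i ^ (k + 1)) + i ^ (k + 1) := by ring
      have e2 : ((k:ℝ) + 1 + 1) * (i + 1) ^ (k + 1) = (i + 1) * ((k + 1) * (i + 1) ^ k) + (i + 1) ^ (k + 1) := by ring
      rw [e, e2]; linarith

noncomputable def Llo (k N : ℕ) : ℝ := ∑ i ∈ range N, ((i:ℝ) / N) ^ k * (1 / N)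
noncomputable def Lhi (k N : ℕ) : ℝ := ∑ i ∈ range N, (((i:ℝ) + 1) / N) ^ k * (1 / N)

lemma L_sandwich (k N : ℕ) (hN : 0 < N) : Llo k N ≤ 1 / (k + 1) ∧ 1 / (k + 1) ≤ Lhi k N := by
  have hN0 : (0:ℝ) < N := by exact_mod_cast hN
  have tel : ∑ i ∈ range N, (((i:ℝ) + 1) ^ (k + 1) - (i:ℝ) ^ (k + 1)) = (N:ℝ) ^ (k + 1) := by
    have := Finset.sum_range_sub (fun i : ℕ => (i:ℝ) ^ (k + 1)) N
    push_cast at this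
    rw [this]; simp
  have e1 : Llo k N = (∑ i ∈ range N, ((k:ℝ) + 1) * (i:ℝ) ^ k) / ((k + 1) * (N:ℝ) ^ (k + 1)) := by
    unfold Llo; rw [Finset.sum_div]
    refine Finset.sum_congr rfl fun i _ => ?_
    rw [div_pow]; field_simp; ring
  have e2 : Lhi k N = (∑ i ∈ range N, ((k:ℝ) + 1) * ((i:ℝ) + 1) ^ k) / ((k + 1) * (N:ℝ) ^ (k + 1)) := by
    unfold Lhi; rw [Finset.sum_div]
    refine Finset.sum_congr rfl fun i _ => ?_
    rw [div_pow]; field_simp; ring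
  have e3 : (1:ℝ) / (k + 1) = (N:ℝ) ^ (k + 1) / ((k + 1) * (N:ℝ) ^ (k + 1)) := by field_simp
  rw [e1, e2, e3, ← tel]
  constructor
  · refine div_le_div_of_nonneg_right (Finset.sum_le_sum fun i _ => (pow_diff k i (by positivity)).1) ?_
    rw [tel]; positivity
  · refine div_le_div_of_nonneg_right (Finset.sum_le_sum fun i _ => (pow_diff k i (by positivity)).2) ?_
    rw [tel]; positivity

lemma L_diff (k N : ℕ) (hk : 0 < k) (hN : 0 < N) : Lhi k N = Llo k N + 1 / N := by
  have hN0 : (0:ℝ) < N := by exact_mod_cast hN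
  have tel := Finset.sum_range_sub (fun i : ℕ => ((i:ℝ) / N) ^ k * (1 / N)) N
  rw [Finset.sum_sub_distrib] at tel
  push_cast at tel
  simp only [div_self hN0.ne', one_pow, one_mul, zero_div, zero_pow hk.ne', zero_mul, sub_zero] at tel
  unfold Lhi Llo
  linarith

lemma block_sum (f : ℕ → ℝ) (x : ℝ) (hx : 0 ≤ x) (N j : ℕ) :
    ∑ n ∈ Ioc 0 ⌊(j:ℝ) / N * x⌋₊, f n = ∑ i ∈ range j, ∑ n ∈ Ioc ⌊(i:ℝ) / N * x⌋₊ ⌊((i:ℝ) + 1) / N * x⌋₊, f n := by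
  induction j with
  | zero => simp
  | succ j ih =>
    rw [Finset.sum_range_succ, ← ih]
    push_cast
    rw [Finset.sum_Ioc_consecutive _ (Nat.zero_le _)]
    refine Nat.floor_mono ?_
    gcongr; linarith

lemma block_Cn (x : ℝ) (hx : 0 ≤ x) (N i : ℕ) :
    ∑ n ∈ Ioc ⌊(i:ℝ) / N * x⌋₊ ⌊((i:ℝ) + 1) / N * x⌋₊, cc n = Cn (((i:ℝ) + 1) / N * x) - Cn ((i:ℝ) / N * x) := by
  unfold Cn
  have h : ⌊(i:ℝ) / N * x⌋₊ ≤ ⌊((i:ℝ) + 1) / N * x⌋₊ := by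
    refine Nat.floor_mono ?_
    gcongr; linarith
  rw [← Finset.sum_Ioc_consecutive _ (Nat.zero_le _) h]; ring

lemma P_lower (k N : ℕ) (hN : 0 < N) (x : ℝ) (hx : 0 < x) :
    ∑ i ∈ range N, ((i:ℝ) / N) ^ k * (Cn (((i:ℝ) + 1) / N * x) - Cn ((i:ℝ) / N * x)) * x ^ k
      ≤ ∑ n ∈ Ioc 0 ⌊x⌋₊, cc n * (n:ℝ) ^ k := by
  have hN0 : (0:ℝ) < N := by exact_mod_cast hN
  have := block_sum (fun n => cc n * (n:ℝ) ^ k) x hx.le N N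
  rw [div_self hN0.ne', one_mul] at this
  rw [this]
  refine Finset.sum_le_sum fun i _ => ?_
  rw [← block_Cn x hx.le, Finset.mul_sum, Finset.sum_mul]
  refine Finset.sum_le_sum fun n hn => ?_
  have h1 : (i:ℝ) / N * x ≤ n := ((Nat.floor_lt (by positivity)).mp (Finset.mem_Ioc.mp hn).1).le
  have h2 : ((i:ℝ) / N * x) ^ k ≤ (n:ℝ) ^ k := by gcongr
  have h3 := mul_le_mul_of_nonneg_left h2 (cc_nonneg n)
  rw [mul_pow] at h3; linarith

lemma P_upper (k N : ℕ) (hN : 0 < N) (x : ℝ) (hx : 0 < x) :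
    ∑ n ∈ Ioc 0 ⌊x⌋₊, cc n * (n:ℝ) ^ k ≤
    ∑ i ∈ range N, (((i:ℝ) + 1) / N) ^ k * (Cn (((i:ℝ) + 1) / N * x) - Cn ((i:ℝ) / N * x)) * x ^ k := by
  have hN0 : (0:ℝ) < N := by exact_mod_cast hN
  have := block_sum (fun n => cc n * (n:ℝ) ^ k) x hx.le N N
  rw [div_self hN0.ne', one_mul] at this
  rw [this]
  refine Finset.sum_le_sum fun i _ => ?_
  rw [← block_Cn x hx.le, Finset.mul_sum, Finset.sum_mul]
  refine Finset.sum_le_sum fun n hn => ?_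
  have h1 : (n:ℝ) ≤ ((i:ℝ) + 1) / N * x := (Nat.le_floor_iff (by positivity)).mp (Finset.mem_Ioc.mp hn).2
  have h2 : (n:ℝ) ^ k ≤ (((i:ℝ) + 1) / N * x) ^ k := by gcongr
  have h3 := mul_le_mul_of_nonneg_left h2 (cc_nonneg n)
  rw [mul_pow] at h3; linarith

lemma Cn_pos {x : ℝ} (hx : 1 ≤ x) : 0 < Cn x := by
  have h := Finset.single_le_sum (f := cc) (s := Ioc 0 ⌊x⌋₊) (fun i _ => cc_nonneg i)
    (a := 1) (by simp only [Finset.mem_Ioc]; exact ⟨one_pos, Nat.one_le_floor_iff x |>.mpr hx⟩)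
  rw [cc_one] at h
  exact lt_of_lt_of_le one_pos h

lemma riemann_lim (N : ℕ) (w : ℕ → ℝ) :
    Tendsto (fun x => ∑ i ∈ range N, w i * ((Cn (((i:ℝ) + 1) / N * x) - Cn ((i:ℝ) / N * x)) / Cn x)) atTop
      (nhds (∑ i ∈ range N, w i * (1 / N))) := by
  refine tendsto_finsetSum _ fun i hi => ?_
  have hiN : i + 1 ≤ N := Finset.mem_range.mp hi
  have hN0 : (0:ℝ) < N := by exact_mod_cast (by omega : 0 < N)
  have hiN' : (i:ℝ) + 1 ≤ N := by exact_mod_cast hiN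
  have h1 := Cn_ratio' (((i:ℝ) + 1) / N) (by positivity) (by rw [div_le_one hN0]; exact hiN')
  have h2 := Cn_ratio' ((i:ℝ) / N) (by positivity) (by rw [div_le_one hN0]; linarith)
  have h3 := (h1.sub h2).const_mul (w i)
  have e : ((i:ℝ) + 1) / N - i / N = 1 / N := by ring
  rw [e] at h3
  simpa only [sub_div] using h3

lemma P_tendsto (k : ℕ) (hk : 0 < k) :
    Tendsto (fun x : ℝ => (∑ n ∈ Ioc 0 ⌊x⌋₊, cc n * (n:ℝ) ^ k) / (Cn x * x ^ k)) atTop (nhds (1 / (k + 1))) := by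
  rw [tendsto_order]
  constructor
  · intro a ha
    obtain ⟨n, hn⟩ := exists_nat_one_div_lt (sub_pos.mpr ha)
    have hs := (L_sandwich k (n + 1) (Nat.succ_pos n)).2
    have hd := L_diff k (n + 1) hk (Nat.succ_pos n)
    have hlt : a < Llo k (n + 1) := by push_cast at hd; linarith
    have hl := riemann_lim (n + 1) (fun i => ((i:ℝ) / ((n + 1 : ℕ) : ℝ)) ^ k)
    filter_upwards [hl.eventually_const_lt hlt, eventually_ge_atTop 1] with x h1 hx
    refine h1.trans_le ?_
    have hC := Cn_pos hx
    have hx0 : 0 < x := by linarith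
    rw [le_div_iff₀ (by positivity), Finset.sum_mul]
    refine le_trans (le_of_eq ?_) (P_lower k (n + 1) (Nat.succ_pos n) x hx0)
    refine Finset.sum_congr rfl fun i _ => ?_
    field_simp
  · intro a ha
    obtain ⟨n, hn⟩ := exists_nat_one_div_lt (sub_pos.mpr ha)
    have hs := (L_sandwich k (n + 1) (Nat.succ_pos n)).1
    have hd := L_diff k (n + 1) hk (Nat.succ_pos n)
    have hlt : Lhi k (n + 1) < a := by push_cast at hd; linarith
    have hl := riemann_lim (n + 1) (fun i => (((i:ℝ) + 1) / ((n + 1 : ℕ) : ℝ)) ^ k)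
    filter_upwards [hl.eventually_lt_const hlt, eventually_ge_atTop 1] with x h1 hx
    refine lt_of_le_of_lt ?_ h1
    have hC := Cn_pos hx
    have hx0 : 0 < x := by linarith
    rw [div_le_iff₀ (by positivity), Finset.sum_mul]
    refine le_trans (P_upper k (n + 1) (Nat.succ_pos n) x hx0) (le_of_eq ?_)
    refine Finset.sum_congr rfl fun i _ => ?_
    field_simp

lemma range_sum (f : ℕ → ℝ) (x : ℝ) :
    ∑ n ∈ (Finset.range (⌊x⌋₊ + 1)).filter IsCyclicNum, f n = ∑ n ∈ Ioc 0 ⌊x⌋₊, cc n * f n := by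
  have e : (Finset.range (⌊x⌋₊ + 1)).filter IsCyclicNum = (Ioc 0 ⌊x⌋₊).filter IsCyclicNum := by
    ext n
    simp only [Finset.mem_filter, Finset.mem_range, Finset.mem_Ioc]
    constructor
    · rintro ⟨h1, h2⟩; exact ⟨⟨h2.1, by omega⟩, h2⟩
    · rintro ⟨h1, h2⟩; exact ⟨by omega, h2⟩
  rw [e, Finset.sum_filter]
  refine Finset.sum_congr rfl fun n _ => ?_
  simp [cc]

theorem cyclicPowSum_isEquivalent_count (k : ℕ) (hk : 0 < k) :
    (fun x : ℝ => cyclicPowSum k x) ~[atTop]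
      (fun x : ℝ => (cyclicCount x : ℝ) * x ^ k / (k + 1)) := by
  have hc : ∀ x : ℝ, (cyclicCount x : ℝ) = Cn x := by
    intro x
    have := range_sum (fun _ => 1) x
    simp only [mul_one, Finset.sum_const, nsmul_eq_mul] at this
    exact this
  have hp : ∀ x : ℝ, cyclicPowSum k x = ∑ n ∈ Ioc 0 ⌊x⌋₊, cc n * (n:ℝ) ^ k := fun x => range_sum _ x
  simp only [hc, hp]
  rw [isEquivalent_iff_tendsto_one]
  · have h := (P_tendsto k hk).const_mul ((k:ℝ) + 1)
    have hk1 : (k:ℝ) + 1 ≠ 0 := by positivity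
    rw [mul_one_div_cancel hk1] at h
    refine h.congr' ?_
    filter_upwards with x
    simp only [Pi.div_apply]
    rw [div_div_eq_mul_div]
    ring
  · filter_upwards [eventually_ge_atTop 1] with x hx
    have hC := Cn_pos hx
    have hx0 : 0 < x := by linarith
    positivity
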